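/- arXiv:2109.02835 — 3 statements merged into one kernel-verified Lean document; each statement's English description precedes it below -/
import Mathlib

section
/- For every nonnegative integer k, the edge-colored lattice L7(k) is E7-structured: for every covering edge t ⋖ s of L7(k) of color i and every node j, m_j(s) = m_j(t) + A(E7)_{i,j}. Moreover L7(k) has a unique maximal element, namely the constant function with value k, and its weight is kω_1: m_1 of the maximal element equals k, and m_j of the maximal element equals 0 for every node j ≠ 1. -/
noncomputable section

namespace CL

variable {N : Type} [DecidableEq N] [Fintype N]

/-- One-step relation generating the partial order on the poset of positions. -/
def step (adj : N → N → Prop) (pos : Finset (N × ℕ)) (x y : N × ℕ) : Prop :=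
  x ∈ pos ∧ y ∈ pos ∧ adj x.1 y.1 ∧ y.2 = x.2 + 1

/-- The partial order on positions, generated by `step`. -/
def ple (adj : N → N → Prop) (pos : Finset (N × ℕ)) : N × ℕ → N × ℕ → Prop :=
  Relation.ReflTransGen (step adj pos)

/-- The lattice of `ℕ`-labellings of the positions which are bounded by `k`, order-reversing,
and satisfy a further constraint `extra`. -/
def Elt (adj : N → N → Prop) (pos : Finset (N × ℕ)) (k : ℕ)
    (extra : ({x : N × ℕ // x ∈ pos} → ℕ) → Prop) : Type :=
  {c : {x : N × ℕ // x ∈ pos} → ℕ //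
    (∀ x, c x ≤ k) ∧ (∀ x y, ple adj pos y.1 x.1 → c x ≤ c y) ∧ extra c}

variable {adj : N → N → Prop} {pos : Finset (N × ℕ)} {k : ℕ}
  {extra : ({x : N × ℕ // x ∈ pos} → ℕ) → Prop}

instance : Finite (Elt adj pos k extra) := by
  apply Finite.of_injective
    (fun c : Elt adj pos k extra =>
      fun x => (⟨c.1 x, Nat.lt_succ_of_le (c.2.1 x)⟩ : Fin (k + 1)))
  intro c d h
  apply Subtype.ext
  funext x
  exact congrArg Fin.val (congrFun h x)

instance : Fintype (Elt adj pos k extra) := Fintype.ofFinite _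

instance : DecidableEq (Elt adj pos k extra) := by unfold Elt; infer_instance

/-- Componentwise comparison of labellings. -/
def elLe (r s : Elt adj pos k extra) : Prop := ∀ x, r.1 x ≤ s.1 x

/-- The covering edge of color `i`: exactly one entry, at a position of color `i`,
is increased by one. -/
def edge (i : N) (r s : Elt adj pos k extra) : Prop :=
  ∃ x : {x : N × ℕ // x ∈ pos}, x.1.1 = i ∧ s.1 x = r.1 x + 1 ∧
    ∀ y, y ≠ x → s.1 y = r.1 y

instance (i : N) (r s : Elt adj pos k extra) : Decidable (edge i r s) := by
  unfold edge; infer_instance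

/-- The rank function: the sum of all entries. -/
def rk (t : Elt adj pos k extra) : ℕ := ∑ x ∈ pos.attach, t.1 x

/-- The connected component of `t` in the graph of color-`i` covering edges. -/
def comp (i : N) (t : Elt adj pos k extra) : Set (Elt adj pos k extra) :=
  {s | Relation.ReflTransGen (fun a b => edge i a b ∨ edge i b a) t s}

/-- The integer `m_i(t) = (ρ(t) − min ρ on comp_i(t)) − (max ρ on comp_i(t) − ρ(t))`. -/
def mwt (i : N) (t : Elt adj pos k extra) : ℤ :=
  ((rk t : ℤ) - ((sInf (rk '' comp i t) : ℕ) : ℤ)) -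
    (((sSup (rk '' comp i t) : ℕ) : ℤ) - (rk t : ℤ))

end CL

/-! ### Type `E₇` data -/

/-- The nodes `1, 2, 3, 4, 5, 5', 6'` of the `E₇` Dynkin diagram. -/
inductive N7 : Type
  | n1 | n2 | n3 | n4 | n5 | n5p | n6p
  deriving DecidableEq

instance : Fintype N7 where
  elems := ⟨([.n1, .n2, .n3, .n4, .n5, .n5p, .n6p] : List N7), by decide⟩
  complete := by intro x; cases x <;> decide

open N7

/-- Adjacency in the `E₇` Dynkin diagram: edges `1-2, 2-3, 3-4, 4-5, 4-5', 5'-6'`. -/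
abbrev adj7 : N7 → N7 → Prop := fun a b =>
  (a, b) ∈ ([(n1, n2), (n2, n3), (n3, n4), (n4, n5), (n4, n5p), (n5p, n6p)] : List (N7 × N7)) ∨
  (b, a) ∈ ([(n1, n2), (n2, n3), (n3, n4), (n4, n5), (n4, n5p), (n5p, n6p)] : List (N7 × N7))

/-- The 27 (color, rank) positions of the minuscule poset `P₇ = P_{E₇}(ω₁)`. -/
def pos7 : Finset (N7 × ℕ) :=
  {(n1, 0), (n2, 1), (n3, 2), (n4, 3), (n5, 4), (n5p, 4), (n4, 5), (n6p, 5), (n3, 6),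
   (n5p, 6), (n2, 7), (n4, 7), (n1, 8), (n3, 8), (n5, 8), (n2, 9), (n4, 9), (n3, 10),
   (n5p, 10), (n4, 11), (n6p, 11), (n5, 12), (n5p, 12), (n4, 13), (n3, 14), (n2, 15), (n1, 16)}

/-- The lattice `L7(k) = L_{E₇}(kω₁)` of order-reversing labellings of `P₇` by `{0,…,k}`. -/
abbrev L7 (k : ℕ) : Type := CL.Elt adj7 pos7 k (fun _ => True)

/-- The Cartan matrix of type `E₇`, indexed by the nodes. -/
def A7 : N7 → N7 → ℤ := fun i j => if i = j then 2 else if adj7 i j then -1 else 0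

/-! ### Helper material -/

namespace CL

variable {N : Type} [DecidableEq N]
variable {adj : N → N → Prop} {pos : Finset (N × ℕ)} {k : ℕ}

/-- Labellings without an extra constraint. -/
abbrev El (adj : N → N → Prop) (pos : Finset (N × ℕ)) (k : ℕ) : Type :=
  Elt adj pos k (fun _ => True)

/-- Extension of a labelling by zero. -/
def ex (t : El adj pos k) (p : N × ℕ) : ℕ := if h : p ∈ pos then t.1 ⟨p, h⟩ else 0

theorem ex_mem (t : El adj pos k) (x : {x : N × ℕ // x ∈ pos}) : ex t x.1 = t.1 x := by
  simp [ex]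

theorem ex_le (t : El adj pos k) (p : N × ℕ) : ex t p ≤ k := by
  unfold ex
  split_ifs with h
  · exact t.2.1 _
  · exact Nat.zero_le _

theorem rk_eq (t : El adj pos k) : rk t = ∑ p ∈ pos, ex t p := by
  rw [← Finset.sum_attach]
  exact Finset.sum_congr rfl fun x _ => (ex_mem t x).symm

theorem ex_step (t : El adj pos k) {p q : N × ℕ} (h : step adj pos p q) : ex t q ≤ ex t p := by
  have := t.2.2.1 ⟨q, h.2.1⟩ ⟨p, h.1⟩ (Relation.ReflTransGen.single h)
  rw [← ex_mem t, ← ex_mem t] at this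
  exact this

/-- Build a labelling from a function on all pairs. -/
def mk (f : N × ℕ → ℕ) (hk : ∀ p ∈ pos, f p ≤ k)
    (hs : ∀ p q, step adj pos p q → f q ≤ f p) : El adj pos k :=
  ⟨fun x => f x.1, fun x => hk _ x.2, by
    intro x y h
    have key : ∀ p q, ple adj pos p q → f q ≤ f p := by
      intro p q h
      induction h with
      | refl => exact le_rfl
      | tail _ h2 ih => exact (hs _ _ h2).trans ih
    exact key _ _ h, trivial⟩

theorem ex_mk (f : N × ℕ → ℕ) (hk : ∀ p ∈ pos, f p ≤ k)
    (hs : ∀ p q, step adj pos p q → f q ≤ f p) {p : N × ℕ} (hp : p ∈ pos) :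
    ex (mk f hk hs) p = f p := by
  simp [ex, mk, hp]

open Classical in
/-- Upper bound for the entry at `p` imposed by its lower covers. -/
def hiF (t : El adj pos k) (p : N × ℕ) : ℕ :=
  (pos.filter fun q => adj q.1 p.1 ∧ p.2 = q.2 + 1).fold min k (ex t)

open Classical in
/-- Lower bound for the entry at `p` imposed by its upper covers. -/
def loF (t : El adj pos k) (p : N × ℕ) : ℕ :=
  (pos.filter fun q => adj p.1 q.1 ∧ q.2 = p.2 + 1).fold max 0 (ex t)

theorem le_hiF (t : El adj pos k) {p : N × ℕ} (hp : p ∈ pos) {c : ℕ} :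
    c ≤ hiF t p ↔ c ≤ k ∧ ∀ q, step adj pos q p → c ≤ ex t q := by
  unfold hiF step
  rw [Finset.le_fold_min]
  simp only [Finset.mem_filter]
  refine and_congr_right fun _ => forall_congr' fun q => ?_
  tauto

theorem loF_le (t : El adj pos k) {p : N × ℕ} (hp : p ∈ pos) {c : ℕ} :
    loF t p ≤ c ↔ ∀ q, step adj pos p q → ex t q ≤ c := by
  unfold loF step
  rw [Finset.fold_max_le]
  simp only [Finset.mem_filter, Nat.zero_le, true_and]
  refine forall_congr' fun q => ?_
  tauto

/-- The maximal element of a component. -/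
def hiE (hirr : ∀ a, ¬ adj a a) (j : N) (t : El adj pos k) : El adj pos k :=
  mk (fun p => if p.1 = j then hiF t p else ex t p)
    (by
      intro p hp
      split_ifs
      · exact ((le_hiF t hp).1 le_rfl).1
      · exact ex_le t p)
    (by
      intro p q h
      split_ifs with h1 h2 h2
      · exact absurd (h1.trans h2.symm ▸ h.2.2.1) (hirr _)
      · exact ((le_hiF t h.2.1).1 le_rfl).2 p h
      · exact (le_hiF t h.1).2 ⟨ex_le t q, fun r hr => (ex_step t h).trans (ex_step t hr)⟩
      · exact ex_step t h)

/-- The minimal element of a component. -/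
def loE (hirr : ∀ a, ¬ adj a a) (j : N) (t : El adj pos k) : El adj pos k :=
  mk (fun p => if p.1 = j then loF t p else ex t p)
    (by
      intro p hp
      split_ifs
      · exact (loF_le t hp).2 fun q _ => ex_le t q
      · exact ex_le t p)
    (by
      intro p q h
      split_ifs with h1 h2 h2
      · exact absurd (h1.trans h2.symm ▸ h.2.2.1) (hirr _)
      · exact (loF_le t h.2.1).2 fun r hr => (ex_step t hr).trans (ex_step t h)
      · exact (loF_le t h.1).1 le_rfl q h
      · exact ex_step t h)

theorem comp_agree {j : N} {t s : El adj pos k} (h : s ∈ comp j t) :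
    ∀ p, p.1 ≠ j → ex s p = ex t p := by
  have key : ∀ a b : El adj pos k, edge j a b → ∀ p, p.1 ≠ j → ex b p = ex a p := by
    rintro a b ⟨x, hx, -, h2⟩ p hp
    by_cases hm : p ∈ pos
    · have := h2 ⟨p, hm⟩ (by rintro rfl; exact hp hx)
      rw [← ex_mem, ← ex_mem] at this
      exact this
    · simp [ex, hm]
  intro p hp
  have h' : Relation.ReflTransGen (fun a b => edge j a b ∨ edge j b a) t s := h
  induction h' with
  | refl => rfl
  | tail h1 h2 ih =>
    rw [← ih h1]
    rcases h2 with h2 | h2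
    · exact key _ _ h2 p hp
    · exact (key _ _ h2 p hp).symm

theorem ext_ex {s t : El adj pos k} (h : ∀ p ∈ pos, ex s p = ex t p) : s = t := by
  apply Subtype.ext
  funext x
  rw [← ex_mem, ← ex_mem]
  exact h _ x.2

theorem reach (hirr : ∀ a, ¬ adj a a) (j : N) (s : El adj pos k) (n : ℕ) :
    ∀ t : El adj pos k, rk s ≤ rk t + n → (∀ p ∈ pos, ex t p ≤ ex s p) →
      (∀ p ∈ pos, p.1 ≠ j → ex t p = ex s p) →
      Relation.ReflTransGen (fun a b => edge j a b ∨ edge j b a) t s := by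
  induction n with
  | zero =>
    intro t h1 h2 _
    have : t = s := by
      apply ext_ex
      rw [rk_eq, rk_eq] at h1
      exact (Finset.sum_eq_sum_iff_of_le h2).1 (le_antisymm (Finset.sum_le_sum h2) h1)
    rw [this]
  | succ n ih =>
    intro t h1 h2 h3
    by_cases hts : t = s
    · rw [hts]
    obtain ⟨x, hx, hlt⟩ : ∃ x ∈ pos, ex t x < ex s x := by
      by_contra! hcon
      exact hts (ext_ex fun p hp => le_antisymm (h2 p hp) (hcon p hp))
    have hxj : x.1 = j := by
      by_contra hne
      exact hlt.ne (h3 x hx hne)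
    let f : N × ℕ → ℕ := fun p => if p = x then ex t x + 1 else ex t p
    have hfk : ∀ p ∈ pos, f p ≤ k := by
      intro p _
      simp only [f]
      split_ifs
      · exact hlt.trans_le (ex_le s x)
      · exact ex_le t p
    have hfs : ∀ p q, step adj pos p q → f q ≤ f p := by
      intro p q h
      have hst := ex_step t h
      have hss := ex_step s h
      simp only [f]
      split_ifs with e1 e2 e2
      · exact le_rfl
      · subst e1
        have : p.1 ≠ j := by
          intro e
          exact hirr _ ((e.trans hxj.symm) ▸ h.2.2.1)
        have := h3 p h.1 this
        omega
      · subst e2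
        omega
      · exact hst
    let t' : El adj pos k := mk f hfk hfs
    have ht' : ∀ p ∈ pos, ex t' p = f p := fun p hp => ex_mk f hfk hfs hp
    have hedge : edge j t t' := by
      refine ⟨⟨x, hx⟩, hxj, ?_, ?_⟩
      · rw [← ex_mem, ← ex_mem, ht' x hx]
        simp [f]
      · intro y hy
        rw [← ex_mem, ← ex_mem, ht' _ y.2]
        have : y.1 ≠ x := fun e => hy (Subtype.ext e)
        simp [f, this]
    refine Relation.ReflTransGen.head (Or.inl hedge) (ih t' ?_ ?_ ?_)
    · have : rk t' = rk t + 1 := by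
        rw [rk_eq, rk_eq, Finset.sum_congr rfl ht', ← Finset.add_sum_erase _ _ hx,
          ← Finset.add_sum_erase pos (ex t) hx]
        have : ∑ p ∈ pos.erase x, f p = ∑ p ∈ pos.erase x, ex t p :=
          Finset.sum_congr rfl fun p hp => by simp [f, Finset.ne_of_mem_erase hp]
        rw [this]
        simp only [f, if_true]
        ring
      omega
    · intro p hp
      rw [ht' p hp]
      simp only [f]
      split_ifs with e
      · subst e; exact hlt
      · exact h2 p hp
    · intro p hp hpj
      rw [ht' p hp]
      have : p ≠ x := by rintro rfl; exact hpj hxj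
      simp only [f, this, if_false]
      exact h3 p hp hpj

theorem ex_hiE (hirr : ∀ a, ¬ adj a a) (j : N) (t : El adj pos k) {p : N × ℕ} (hp : p ∈ pos) :
    ex (hiE hirr j t) p = if p.1 = j then hiF t p else ex t p := ex_mk _ _ _ hp

theorem ex_loE (hirr : ∀ a, ¬ adj a a) (j : N) (t : El adj pos k) {p : N × ℕ} (hp : p ∈ pos) :
    ex (loE hirr j t) p = if p.1 = j then loF t p else ex t p := ex_mk _ _ _ hp

theorem comp_le_hi (hirr : ∀ a, ¬ adj a a) (j : N) {t s : El adj pos k} (h : s ∈ comp j t) :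
    ∀ p ∈ pos, ex s p ≤ ex (hiE hirr j t) p := by
  intro p hp
  rw [ex_hiE hirr j t hp]
  split_ifs with e
  · refine (le_hiF t hp).2 ⟨ex_le s p, fun q hq => ?_⟩
    rw [← comp_agree h q fun e' => hirr _ ((e'.trans e.symm) ▸ hq.2.2.1)]
    exact ex_step s hq
  · exact (comp_agree h p e).le

theorem lo_le_comp (hirr : ∀ a, ¬ adj a a) (j : N) {t s : El adj pos k} (h : s ∈ comp j t) :
    ∀ p ∈ pos, ex (loE hirr j t) p ≤ ex s p := by
  intro p hp
  rw [ex_loE hirr j t hp]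
  split_ifs with e
  · refine (loF_le t hp).2 fun q hq => ?_
    rw [← comp_agree h q fun e' => hirr _ ((e'.trans e.symm) ▸ hq.2.2.1)]
    exact ex_step s hq
  · exact (comp_agree h p e).ge

theorem mem_comp_self (j : N) (t : El adj pos k) : t ∈ comp j t :=
  Relation.ReflTransGen.refl

theorem hi_mem (hirr : ∀ a, ¬ adj a a) (j : N) (t : El adj pos k) : hiE hirr j t ∈ comp j t := by
  refine reach hirr j _ (rk (hiE hirr j t)) t (by omega)
    (comp_le_hi hirr j (mem_comp_self j t)) fun p hp hj => ?_
  rw [ex_hiE hirr j t hp, if_neg hj]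

theorem lo_mem (hirr : ∀ a, ¬ adj a a) (j : N) (t : El adj pos k) : loE hirr j t ∈ comp j t := by
  have : Relation.ReflTransGen (fun a b => edge j a b ∨ edge j b a) (loE hirr j t) t := by
    refine reach hirr j _ (rk t) _ (by omega)
      (lo_le_comp hirr j (mem_comp_self j t)) fun p hp hj => ?_
    rw [ex_loE hirr j t hp, if_neg hj]
  exact (@Relation.ReflTransGen.stdSymm _ _ ⟨fun _ _ h => h.symm⟩).symm _ _ this

theorem sSup_eq (hirr : ∀ a, ¬ adj a a) (j : N) (t : El adj pos k) : sSup (rk '' comp j t) = rk (hiE hirr j t) := by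
  apply IsGreatest.csSup_eq
  refine ⟨⟨_, hi_mem hirr j t, rfl⟩, ?_⟩
  rintro _ ⟨s, hs, rfl⟩
  rw [rk_eq, rk_eq]
  exact Finset.sum_le_sum (comp_le_hi hirr j hs)

theorem sInf_eq (hirr : ∀ a, ¬ adj a a) (j : N) (t : El adj pos k) : sInf (rk '' comp j t) = rk (loE hirr j t) := by
  apply IsLeast.csInf_eq
  refine ⟨⟨_, lo_mem hirr j t, rfl⟩, ?_⟩
  rintro _ ⟨s, hs, rfl⟩
  rw [rk_eq, rk_eq]
  exact Finset.sum_le_sum (lo_le_comp hirr j hs)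

theorem mwt_eq (hirr : ∀ a, ¬ adj a a) (j : N) (t : El adj pos k) :
    mwt j t = ∑ p ∈ pos, if p.1 = j then 2 * (ex t p : ℤ) - hiF t p - loF t p else 0 := by
  unfold mwt
  rw [sSup_eq hirr, sInf_eq hirr, rk_eq, rk_eq, rk_eq]
  push_cast
  rw [← Finset.sum_sub_distrib, ← Finset.sum_sub_distrib, ← Finset.sum_sub_distrib]
  refine Finset.sum_congr rfl fun p hp => ?_
  rw [ex_hiE hirr j t hp, ex_loE hirr j t hp]
  split_ifs <;> ring

end CL

theorem adj7_irr : ∀ a, ¬ adj7 a a := by decide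

theorem filt_lo (p : N7 × ℕ) (S : Finset (N7 × ℕ))
    (h : (pos7.filter fun q => adj7 q.1 p.1 ∧ p.2 = q.2 + 1) = S) {k : ℕ} (t : L7 k) :
    CL.hiF t p = S.fold min k (CL.ex t) := by
  subst h
  unfold CL.hiF
  congr

theorem filt_hi (p : N7 × ℕ) (S : Finset (N7 × ℕ))
    (h : (pos7.filter fun q => adj7 p.1 q.1 ∧ q.2 = p.2 + 1) = S) {k : ℕ} (t : L7 k) :
    CL.loF t p = S.fold max 0 (CL.ex t) := by
  subst h
  unfold CL.loF
  congr

theorem sum27 (F : N7 × ℕ → ℤ) : ∑ p ∈ pos7, F p =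
    F (n1, 0) + F (n2, 1) + F (n3, 2) + F (n4, 3) + F (n5, 4) + F (n5p, 4) +
    F (n4, 5) + F (n6p, 5) + F (n3, 6) + F (n5p, 6) + F (n2, 7) + F (n4, 7) +
    F (n1, 8) + F (n3, 8) + F (n5, 8) + F (n2, 9) + F (n4, 9) + F (n3, 10) +
    F (n5p, 10) + F (n4, 11) + F (n6p, 11) + F (n5, 12) + F (n5p, 12) + F (n4, 13) +
    F (n3, 14) + F (n2, 15) + F (n1, 16) := by
  simp [pos7]
  ring

/-- The weight is an affine function of the labelling. -/
theorem mwt7 {k : ℕ} (j : N7) (t : L7 k) :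
    CL.mwt j t = ∑ p ∈ pos7, A7 p.1 j * (CL.ex t p : ℤ) - if j = n1 then (k : ℤ) else 0 := by
  have hk : ∀ p, min (CL.ex t p) k = CL.ex t p := fun p => min_eq_left (CL.ex_le t p)
  rw [CL.mwt_eq adj7_irr]
  cases j
  · simp only [sum27,
      filt_lo (n1, 0) ∅ (by decide),
      filt_hi (n1, 0) {(n2, 1)} (by decide),
      filt_lo (n1, 8) {(n2, 7)} (by decide),
      filt_hi (n1, 8) {(n2, 9)} (by decide),
      filt_lo (n1, 16) {(n2, 15)} (by decide),
      filt_hi (n1, 16) ∅ (by decide)]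
    generalize CL.ex t = f at hk
    simp [A7, adj7, hk]
    try linarith
  · simp only [sum27,
      filt_lo (n2, 1) {(n1, 0)} (by decide),
      filt_hi (n2, 1) {(n3, 2)} (by decide),
      filt_lo (n2, 7) {(n3, 6)} (by decide),
      filt_hi (n2, 7) {(n1, 8), (n3, 8)} (by decide),
      filt_lo (n2, 9) {(n1, 8), (n3, 8)} (by decide),
      filt_hi (n2, 9) {(n3, 10)} (by decide),
      filt_lo (n2, 15) {(n3, 14)} (by decide),
      filt_hi (n2, 15) {(n1, 16)} (by decide)]
    generalize CL.ex t = f at hk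
    simp [A7, adj7, hk]
    have := min_add_max (f (n1, 8) : ℤ) (f (n3, 8))
    try linarith
  · simp only [sum27,
      filt_lo (n3, 2) {(n2, 1)} (by decide),
      filt_hi (n3, 2) {(n4, 3)} (by decide),
      filt_lo (n3, 6) {(n4, 5)} (by decide),
      filt_hi (n3, 6) {(n2, 7), (n4, 7)} (by decide),
      filt_lo (n3, 8) {(n2, 7), (n4, 7)} (by decide),
      filt_hi (n3, 8) {(n2, 9), (n4, 9)} (by decide),
      filt_lo (n3, 10) {(n2, 9), (n4, 9)} (by decide),
      filt_hi (n3, 10) {(n4, 11)} (by decide),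
      filt_lo (n3, 14) {(n4, 13)} (by decide),
      filt_hi (n3, 14) {(n2, 15)} (by decide)]
    generalize CL.ex t = f at hk
    simp [A7, adj7, hk]
    have := min_add_max (f (n2, 7) : ℤ) (f (n4, 7))
    have := min_add_max (f (n2, 9) : ℤ) (f (n4, 9))
    try linarith
  · simp only [sum27,
      filt_lo (n4, 3) {(n3, 2)} (by decide),
      filt_hi (n4, 3) {(n5, 4), (n5p, 4)} (by decide),
      filt_lo (n4, 5) {(n5, 4), (n5p, 4)} (by decide),
      filt_hi (n4, 5) {(n3, 6), (n5p, 6)} (by decide),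
      filt_lo (n4, 7) {(n3, 6), (n5p, 6)} (by decide),
      filt_hi (n4, 7) {(n3, 8), (n5, 8)} (by decide),
      filt_lo (n4, 9) {(n3, 8), (n5, 8)} (by decide),
      filt_hi (n4, 9) {(n3, 10), (n5p, 10)} (by decide),
      filt_lo (n4, 11) {(n3, 10), (n5p, 10)} (by decide),
      filt_hi (n4, 11) {(n5, 12), (n5p, 12)} (by decide),
      filt_lo (n4, 13) {(n5, 12), (n5p, 12)} (by decide),
      filt_hi (n4, 13) {(n3, 14)} (by decide)]
    generalize CL.ex t = f at hk
    simp [A7, adj7, hk]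
    have := min_add_max (f (n5, 4) : ℤ) (f (n5p, 4))
    have := min_add_max (f (n3, 6) : ℤ) (f (n5p, 6))
    have := min_add_max (f (n3, 8) : ℤ) (f (n5, 8))
    have := min_add_max (f (n3, 10) : ℤ) (f (n5p, 10))
    have := min_add_max (f (n5, 12) : ℤ) (f (n5p, 12))
    try linarith
  · simp only [sum27,
      filt_lo (n5, 4) {(n4, 3)} (by decide),
      filt_hi (n5, 4) {(n4, 5)} (by decide),
      filt_lo (n5, 8) {(n4, 7)} (by decide),
      filt_hi (n5, 8) {(n4, 9)} (by decide),
      filt_lo (n5, 12) {(n4, 11)} (by decide),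
      filt_hi (n5, 12) {(n4, 13)} (by decide)]
    generalize CL.ex t = f at hk
    simp [A7, adj7, hk]
    try linarith
  · simp only [sum27,
      filt_lo (n5p, 4) {(n4, 3)} (by decide),
      filt_hi (n5p, 4) {(n4, 5), (n6p, 5)} (by decide),
      filt_lo (n5p, 6) {(n4, 5), (n6p, 5)} (by decide),
      filt_hi (n5p, 6) {(n4, 7)} (by decide),
      filt_lo (n5p, 10) {(n4, 9)} (by decide),
      filt_hi (n5p, 10) {(n4, 11), (n6p, 11)} (by decide),
      filt_lo (n5p, 12) {(n4, 11), (n6p, 11)} (by decide),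
      filt_hi (n5p, 12) {(n4, 13)} (by decide)]
    generalize CL.ex t = f at hk
    simp [A7, adj7, hk]
    have := min_add_max (f (n4, 5) : ℤ) (f (n6p, 5))
    have := min_add_max (f (n4, 11) : ℤ) (f (n6p, 11))
    try linarith
  · simp only [sum27,
      filt_lo (n6p, 5) {(n5p, 4)} (by decide),
      filt_hi (n6p, 5) {(n5p, 6)} (by decide),
      filt_lo (n6p, 11) {(n5p, 10)} (by decide),
      filt_hi (n6p, 11) {(n5p, 12)} (by decide)]
    generalize CL.ex t = f at hk
    simp [A7, adj7, hk]
    try linarith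

theorem statement_aux {k : ℕ} (i : N7) (t s : L7 k) (h : CL.edge i t s) (j : N7) :
    CL.mwt j s = CL.mwt j t + A7 i j := by
  obtain ⟨x, rfl, h1, h2⟩ := h
  rw [mwt7, mwt7]
  have e : ∀ p ∈ pos7, A7 p.1 j * (CL.ex s p : ℤ) =
      A7 p.1 j * (CL.ex t p : ℤ) + if p = x.1 then A7 p.1 j else 0 := by
    intro p hp
    split_ifs with hpx
    · subst hpx
      rw [CL.ex_mem, CL.ex_mem, h1]
      push_cast
      ring
    · have := h2 ⟨p, hp⟩ (fun e => hpx (congrArg Subtype.val e))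
      rw [← CL.ex_mem, ← CL.ex_mem] at this
      rw [this, add_zero]
  rw [Finset.sum_congr rfl e, Finset.sum_add_distrib, Finset.sum_ite_eq' pos7 x.1, if_pos x.2]
  ring

/-- `L7(k)` is `E₇`-structured, and its unique maximal element (the constant
function `k`) has weight `kω₁`. -/
theorem statement_2 (k : ℕ) :
    (∀ (i : N7) (t s : L7 k), CL.edge i t s → ∀ j : N7,
      CL.mwt j s = CL.mwt j t + A7 i j) ∧
    (∃ top : L7 k, (∀ x, top.1 x = k) ∧ (∀ t : L7 k, CL.elLe t top) ∧
      CL.mwt n1 top = (k : ℤ) ∧ ∀ j : N7, j ≠ n1 → CL.mwt j top = 0) := by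
  refine ⟨fun i t s h j => statement_aux i t s h j, ?_⟩
  refine ⟨CL.mk (fun _ => k) (fun _ _ => le_rfl) (fun _ _ _ => le_rfl), fun _ => rfl,
    fun t x => t.2.1 x, ?_⟩
  have key : ∀ j : N7, CL.mwt j (CL.mk (fun _ => k) (fun _ _ => le_rfl) (fun _ _ _ => le_rfl) :
      L7 k) = (∑ p ∈ pos7, A7 p.1 j) * (k : ℤ) - if j = n1 then (k : ℤ) else 0 := by
    intro j
    rw [mwt7, Finset.sum_mul]
    congr 1
  have hs : ∀ j : N7, (∑ p ∈ pos7, A7 p.1 j) = if j = n1 then 2 else 0 := by decide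
  refine ⟨?_, fun j hj => ?_⟩
  · rw [key, hs, if_pos rfl, if_pos rfl]
    ring
  · rw [key, hs, if_neg hj, if_neg hj]
    ring

end
end

section
/- For all nonnegative integers a and b, the edge-colored lattice L6(a,b) is E6-structured: for every covering edge t ⋖ s of L6(a,b) of color i and every node j, m_j(s) = m_j(t) + A(E6)_{i,j}. Moreover L6(a,b) has a unique maximal element, and its weight is aω_{1'} + bω_{6'}: m_{1'} of the maximal element equals a, m_{6'} of the maximal element equals b, and m_j of the maximal element equals 0 for every other node j. -/
noncomputable section

/-! ### Type `E₆` data -/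

/-- The nodes `1', 2', 3', 4', 5', 6'` of the `E₆` Dynkin diagram. -/
inductive N6 : Type
  | m1 | m2 | m3 | m4 | m5 | m6
  deriving DecidableEq

instance : Fintype N6 where
  elems := {N6.m1, N6.m2, N6.m3, N6.m4, N6.m5, N6.m6}
  complete := by intro x; cases x <;> decide

open N6

/-- Adjacency in the `E₆` Dynkin diagram: edges `1'-2', 2'-3', 3'-4', 3'-5', 5'-6'`. -/
abbrev adj6 : N6 → N6 → Prop := fun a b =>
  (a, b) ∈ ([(m1, m2), (m2, m3), (m3, m4), (m3, m5), (m5, m6)] : List (N6 × N6)) ∨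
  (b, a) ∈ ([(m1, m2), (m2, m3), (m3, m4), (m3, m5), (m5, m6)] : List (N6 × N6))

/-- The Cartan matrix of type `E₆`, indexed by the nodes. -/
def A6 : N6 → N6 → ℤ := fun i j => if i = j then 2 else if adj6 i j then -1 else 0

/-- The 24 (color, rank) positions of the poset `P24 = 𝒫`. -/
def pos24 : Finset (N6 × ℕ) :=
  {(m1, 0), (m2, 1), (m3, 2), (m4, 3), (m5, 3), (m3, 4), (m6, 4), (m2, 5), (m5, 5),
   (m1, 6), (m3, 6), (m2, 7), (m4, 7), (m1, 8), (m3, 8), (m2, 9), (m5, 9), (m3, 10),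
   (m6, 10), (m4, 11), (m5, 11), (m3, 12), (m2, 13), (m1, 14)}

/-- The 16 (color, rank) positions of the minuscule poset `P16' = P_{E₆}(ω₁')`. -/
def pos16p : Finset (N6 × ℕ) :=
  {(m6, 0), (m5, 1), (m3, 2), (m2, 3), (m4, 3), (m1, 4), (m3, 4), (m2, 5), (m5, 5),
   (m3, 6), (m6, 6), (m4, 7), (m5, 7), (m3, 8), (m2, 9), (m1, 10)}

/-- The 16 (color, rank) positions of the minuscule poset `P16'' = P_{E₆}(ω₆')`. -/
def pos16pp : Finset (N6 × ℕ) :=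
  {(m1, 0), (m2, 1), (m3, 2), (m4, 3), (m5, 3), (m3, 4), (m6, 4), (m2, 5), (m5, 5),
   (m1, 6), (m3, 6), (m2, 7), (m4, 7), (m3, 8), (m5, 9), (m6, 10)}

/-- The extra constraints on elements of `L6(a,b)`: `c((1',8)) ≤ a` and `c((1',6)) ≥ a`. -/
def extra6 (a : ℕ) : ({x : N6 × ℕ // x ∈ pos24} → ℕ) → Prop := fun c =>
  c ⟨(m1, 8), by decide⟩ ≤ a ∧ a ≤ c ⟨(m1, 6), by decide⟩

/-- The lattice `L6(a,b) = L_{E₆}(aω₁' + bω₆')`. -/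
abbrev L6ab (a b : ℕ) : Type := CL.Elt adj6 pos24 (a + b) (extra6 a)

/-- The lattice `L6'(k) = L_{E₆}(kω₁')`. -/
abbrev L6p (k : ℕ) : Type := CL.Elt adj6 pos16p k (fun _ => True)

/-- The lattice `L6''(k) = L_{E₆}(kω₆')`. -/
abbrev L6pp (k : ℕ) : Type := CL.Elt adj6 pos16pp k (fun _ => True)

namespace CL

section gen
variable {N : Type} [DecidableEq N] [Fintype N]
variable {adj : N → N → Prop} {pos : Finset (N × ℕ)} {k : ℕ}
  {extra : ({x : N × ℕ // x ∈ pos} → ℕ) → Prop}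

/-- Validity of a labelling. -/
def Valid (adj : N → N → Prop) (pos : Finset (N × ℕ)) (k : ℕ)
    (extra : ({x : N × ℕ // x ∈ pos} → ℕ) → Prop) (c : {x : N × ℕ // x ∈ pos} → ℕ) : Prop :=
  (∀ x, c x ≤ k) ∧ (∀ x y, ple adj pos y.1 x.1 → c x ≤ c y) ∧ extra c

lemma rk_edge {i : N} {r s : Elt adj pos k extra} (h : edge i r s) : rk s = rk r + 1 := by
  obtain ⟨x, -, h1, h2⟩ := h
  unfold rk
  rw [← Finset.add_sum_erase _ _ (Finset.mem_attach pos x),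
    ← Finset.add_sum_erase _ r.1 (Finset.mem_attach pos x), h1,
    Finset.sum_congr rfl (fun y hy => h2 y (Finset.ne_of_mem_erase hy))]
  ring

lemma comp_agree_s3 {i : N} {t s : Elt adj pos k extra} (h : s ∈ comp i t) :
    ∀ x, x.1.1 ≠ i → s.1 x = t.1 x := by
  induction h with
  | refl => intros; rfl
  | tail _ h ih =>
    intro x hx
    rw [← ih x hx]
    rcases h with ⟨y, hy, -, h2⟩ | ⟨y, hy, -, h2⟩
    · exact h2 x (by rintro rfl; exact hx hy)
    · exact (h2 x (by rintro rfl; exact hx hy)).symm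

lemma comp_symm {i : N} {t s : Elt adj pos k extra} (h : s ∈ comp i t) : t ∈ comp i s := by
  change Relation.ReflTransGen _ s t
  induction h with
  | refl => exact Relation.ReflTransGen.refl
  | tail _ h ih => exact Relation.ReflTransGen.head h.symm ih

lemma reach_s3 {i : N} {lo hi : {x : N × ℕ // x ∈ pos} → ℕ} (u : Elt adj pos k extra)
    (hbox : ∀ c : {x : N × ℕ // x ∈ pos} → ℕ, (∀ x, x.1.1 ≠ i → c x = u.1 x) →
      (Valid adj pos k extra c ↔ ∀ x, x.1.1 = i → lo x ≤ c x ∧ c x ≤ hi x)) :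
    ∀ (n : ℕ) (s t : Elt adj pos k extra), (∀ x, x.1.1 ≠ i → s.1 x = u.1 x) →
      (∀ x, x.1.1 ≠ i → t.1 x = u.1 x) → (∀ x, s.1 x ≤ t.1 x) → rk t = rk s + n →
      s ∈ comp i t := by
  intro n
  induction n with
  | zero =>
    intro s t hs ht hst hr
    have : s = t := by
      apply Subtype.ext
      funext x
      have := (Finset.sum_eq_sum_iff_of_le (fun x (_ : x ∈ pos.attach) => hst x)).1 hr.symm
      exact this x (Finset.mem_attach _ _)
    rw [this]
    exact Relation.ReflTransGen.refl
  | succ n ih =>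
    intro s t hs ht hst hr
    have : ∃ x, s.1 x < t.1 x := by
      by_contra! hcon
      have : rk t ≤ rk s := Finset.sum_le_sum (fun x _ => hcon x)
      omega
    obtain ⟨x, hx⟩ := this
    have hxi : x.1.1 = i := by
      by_contra hne
      rw [hs x hne, ht x hne] at hx
      exact lt_irrefl _ hx
    have hsb := (hbox s.1 hs).1 s.2
    have htb := (hbox t.1 ht).1 t.2
    have hcag : ∀ y, y.1.1 ≠ i → Function.update t.1 x (t.1 x - 1) y = u.1 y := by
      intro y hy
      rw [Function.update_of_ne (by rintro rfl; exact hy hxi)]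
      exact ht y hy
    let c : Elt adj pos k extra := ⟨Function.update t.1 x (t.1 x - 1), by
      refine (hbox _ hcag).2 ?_
      intro y hy
      by_cases hyx : y = x
      · subst hyx
        rw [Function.update_self]
        have := hsb y hy
        have := htb y hy
        omega
      · rw [Function.update_of_ne hyx]
        exact htb y hy⟩
    have he : edge i c t := by
      refine ⟨x, hxi, ?_, ?_⟩
      · change t.1 x = Function.update t.1 x (t.1 x - 1) x + 1
        rw [Function.update_self]; omega
      · intro y hy
        change t.1 y = Function.update t.1 x (t.1 x - 1) y
        rw [Function.update_of_ne hy]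
    have := rk_edge he
    refine Relation.ReflTransGen.head (Or.inr he) (ih s c hs hcag ?_ (by omega))
    intro y
    change s.1 y ≤ Function.update t.1 x (t.1 x - 1) y
    by_cases hyx : y = x
    · subst hyx; rw [Function.update_self]; omega
    · rw [Function.update_of_ne hyx]; exact hst y

lemma mwt_box {i : N} {lo hi : {x : N × ℕ // x ∈ pos} → ℕ} (t : Elt adj pos k extra)
    (hbox : ∀ c : {x : N × ℕ // x ∈ pos} → ℕ, (∀ x, x.1.1 ≠ i → c x = t.1 x) →
      (Valid adj pos k extra c ↔ ∀ x, x.1.1 = i → lo x ≤ c x ∧ c x ≤ hi x)) :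
    mwt i t = ∑ x ∈ pos.attach,
      if x.1.1 = i then (2 * (t.1 x : ℤ) - lo x - hi x) else 0 := by
  have htb := (hbox t.1 (fun _ _ => rfl)).1 t.2
  have hlag : ∀ x : {x : N × ℕ // x ∈ pos}, x.1.1 ≠ i →
      (if x.1.1 = i then lo x else t.1 x) = t.1 x := fun x hx => if_neg hx
  have hhag : ∀ x : {x : N × ℕ // x ∈ pos}, x.1.1 ≠ i →
      (if x.1.1 = i then hi x else t.1 x) = t.1 x := fun x hx => if_neg hx
  let tl : Elt adj pos k extra := ⟨fun x => if x.1.1 = i then lo x else t.1 x, by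
    refine (hbox _ hlag).2 ?_
    intro x hx
    have := htb x hx
    simp only [hx, if_true]
    omega⟩
  let th : Elt adj pos k extra := ⟨fun x => if x.1.1 = i then hi x else t.1 x, by
    refine (hbox _ hhag).2 ?_
    intro x hx
    have := htb x hx
    simp only [hx, if_true]
    omega⟩
  have hle : ∀ s : Elt adj pos k extra, (∀ x, x.1.1 ≠ i → s.1 x = t.1 x) →
      (∀ x, tl.1 x ≤ s.1 x) ∧ (∀ x, s.1 x ≤ th.1 x) := by
    intro s hs
    have hsb := (hbox s.1 hs).1 s.2
    constructor <;> intro x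
    · change (if x.1.1 = i then lo x else t.1 x) ≤ s.1 x
      split_ifs with h
      · exact (hsb x h).1
      · exact (hs x h).ge
    · change s.1 x ≤ (if x.1.1 = i then hi x else t.1 x)
      split_ifs with h
      · exact (hsb x h).2
      · exact (hs x h).le
  have hrk : ∀ s : Elt adj pos k extra, (∀ x, x.1.1 ≠ i → s.1 x = t.1 x) →
      rk tl ≤ rk s ∧ rk s ≤ rk th := fun s hs =>
    ⟨Finset.sum_le_sum (fun x _ => (hle s hs).1 x), Finset.sum_le_sum (fun x _ => (hle s hs).2 x)⟩
  have htt := hrk t (fun _ _ => rfl)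
  have hlt := hle t (fun _ _ => rfl)
  have hlc : tl ∈ comp i t :=
    reach_s3 t hbox (rk t - rk tl) tl t hlag (fun _ _ => rfl) hlt.1 (by omega)
  have hhc : th ∈ comp i t := comp_symm <|
    reach_s3 t hbox (rk th - rk t) t th (fun _ _ => rfl) hhag hlt.2 (by omega)
  have e1 : sInf (rk '' comp i t) = rk tl := by
    apply IsLeast.csInf_eq
    refine ⟨⟨tl, hlc, rfl⟩, ?_⟩
    rintro _ ⟨s, hs, rfl⟩
    exact (hrk s (comp_agree_s3 hs)).1
  have e2 : sSup (rk '' comp i t) = rk th := by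
    apply IsGreatest.csSup_eq
    refine ⟨⟨th, hhc, rfl⟩, ?_⟩
    rintro _ ⟨s, hs, rfl⟩
    exact (hrk s (comp_agree_s3 hs)).2
  unfold mwt
  rw [e1, e2]
  unfold rk
  push_cast
  rw [← Finset.sum_sub_distrib, ← Finset.sum_sub_distrib, ← Finset.sum_sub_distrib]
  apply Finset.sum_congr rfl
  intro x _
  change (t.1 x : ℤ) - ((if x.1.1 = i then lo x else t.1 x : ℕ) : ℤ) -
    (((if x.1.1 = i then hi x else t.1 x : ℕ) : ℤ) - t.1 x) = _
  split_ifs <;> ring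

lemma valid_iff (c : {x : N × ℕ // x ∈ pos} → ℕ) : Valid adj pos k extra c ↔
    (∀ x, c x ≤ k) ∧ (∀ x y, adj y.1.1 x.1.1 → x.1.2 = y.1.2 + 1 → c x ≤ c y) ∧ extra c := by
  unfold Valid
  refine and_congr Iff.rfl (and_congr ⟨?_, ?_⟩ Iff.rfl)
  · intro h x y h1 h2
    exact h x y (Relation.ReflTransGen.single ⟨y.2, x.2, h1, h2⟩)
  · intro h x y hxy
    have key : ∀ p q, ple adj pos p q → ∀ (hp : p ∈ pos) (hq : q ∈ pos),
        c ⟨q, hq⟩ ≤ c ⟨p, hp⟩ := by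
      intro p q hpq
      induction hpq with
      | refl => intros; exact le_rfl
      | tail _ hs ih =>
        intro hp hq
        exact (h ⟨_, hq⟩ ⟨_, hs.1⟩ hs.2.2.1 hs.2.2.2).trans (ih hp hs.1)
    exact key _ _ hxy y.2 x.2

end gen
end CL

/-- Lower bound at a position, given the other values. -/
def loF (a : ℕ) (f : N6 × ℕ → ℕ) : N6 × ℕ → ℕ
  | (m1, 0) => f (m2, 1)
  | (m2, 1) => f (m3, 2)
  | (m3, 2) => max (f (m4, 3)) (f (m5, 3))
  | (m4, 3) => f (m3, 4)
  | (m5, 3) => max (f (m3, 4)) (f (m6, 4))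
  | (m3, 4) => max (f (m2, 5)) (f (m5, 5))
  | (m6, 4) => f (m5, 5)
  | (m2, 5) => max (f (m1, 6)) (f (m3, 6))
  | (m5, 5) => f (m3, 6)
  | (m1, 6) => max (f (m2, 7)) (a)
  | (m3, 6) => max (f (m2, 7)) (f (m4, 7))
  | (m2, 7) => max (f (m1, 8)) (f (m3, 8))
  | (m4, 7) => f (m3, 8)
  | (m1, 8) => f (m2, 9)
  | (m3, 8) => max (f (m2, 9)) (f (m5, 9))
  | (m2, 9) => f (m3, 10)
  | (m5, 9) => max (f (m3, 10)) (f (m6, 10))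
  | (m3, 10) => max (f (m4, 11)) (f (m5, 11))
  | (m6, 10) => f (m5, 11)
  | (m4, 11) => f (m3, 12)
  | (m5, 11) => f (m3, 12)
  | (m3, 12) => f (m2, 13)
  | (m2, 13) => f (m1, 14)
  | (m1, 14) => 0
  | _ => 0

/-- Upper bound at a position, given the other values. -/
def hiF (a k : ℕ) (f : N6 × ℕ → ℕ) : N6 × ℕ → ℕ
  | (m1, 0) => k
  | (m2, 1) => f (m1, 0)
  | (m3, 2) => f (m2, 1)
  | (m4, 3) => f (m3, 2)
  | (m5, 3) => f (m3, 2)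
  | (m3, 4) => min (f (m4, 3)) (f (m5, 3))
  | (m6, 4) => f (m5, 3)
  | (m2, 5) => f (m3, 4)
  | (m5, 5) => min (f (m3, 4)) (f (m6, 4))
  | (m1, 6) => f (m2, 5)
  | (m3, 6) => min (f (m2, 5)) (f (m5, 5))
  | (m2, 7) => min (f (m1, 6)) (f (m3, 6))
  | (m4, 7) => f (m3, 6)
  | (m1, 8) => min (f (m2, 7)) (a)
  | (m3, 8) => min (f (m2, 7)) (f (m4, 7))
  | (m2, 9) => min (f (m1, 8)) (f (m3, 8))
  | (m5, 9) => f (m3, 8)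
  | (m3, 10) => min (f (m2, 9)) (f (m5, 9))
  | (m6, 10) => f (m5, 9)
  | (m4, 11) => f (m3, 10)
  | (m5, 11) => min (f (m3, 10)) (f (m6, 10))
  | (m3, 12) => min (f (m4, 11)) (f (m5, 11))
  | (m2, 13) => f (m3, 12)
  | (m1, 14) => f (m2, 13)
  | _ => 0


/-- Extension of a labelling by zero. -/
def ext0 (c : {x : N6 × ℕ // x ∈ pos24} → ℕ) (p : N6 × ℕ) : ℕ :=
  if h : p ∈ pos24 then c ⟨p, h⟩ else 0

lemma ext0_of (c : {x : N6 × ℕ // x ∈ pos24} → ℕ) (x : {x : N6 × ℕ // x ∈ pos24}) :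
    c x = ext0 c x.1 := by simp [ext0, x.2]

lemma forall24 (P : N6 × ℕ → Prop) : (∀ p ∈ pos24, P p) ↔
    (P (m1, 0) ∧ P (m2, 1) ∧ P (m3, 2) ∧ P (m4, 3) ∧ P (m5, 3) ∧ P (m3, 4) ∧ P (m6, 4) ∧
     P (m2, 5) ∧ P (m5, 5) ∧ P (m1, 6) ∧ P (m3, 6) ∧ P (m2, 7) ∧ P (m4, 7) ∧ P (m1, 8) ∧
     P (m3, 8) ∧ P (m2, 9) ∧ P (m5, 9) ∧ P (m3, 10) ∧ P (m6, 10) ∧ P (m4, 11) ∧ P (m5, 11) ∧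
     P (m3, 12) ∧ P (m2, 13) ∧ P (m1, 14)) := by
  simp only [pos24, Finset.forall_mem_insert, Finset.mem_singleton, forall_eq]

lemma sum24 (F : N6 × ℕ → ℤ) : ∑ p ∈ pos24, F p =
    F (m1, 0) + F (m2, 1) + F (m3, 2) + F (m4, 3) + F (m5, 3) + F (m3, 4) + F (m6, 4) +
     F (m2, 5) + F (m5, 5) + F (m1, 6) + F (m3, 6) + F (m2, 7) + F (m4, 7) + F (m1, 8) +
     F (m3, 8) + F (m2, 9) + F (m5, 9) + F (m3, 10) + F (m6, 10) + F (m4, 11) + F (m5, 11) +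
     F (m3, 12) + F (m2, 13) + F (m1, 14) := by
  unfold pos24
  repeat rw [Finset.sum_insert (by decide)]
  rw [Finset.sum_singleton]
  ring

lemma hi_spec (a k : ℕ) (f : N6 × ℕ → ℕ) (hk : ∀ p, f p ≤ k) (v : ℕ) :
    ∀ x ∈ pos24, (v ≤ hiF a k f x ↔ v ≤ k ∧
      (∀ y ∈ pos24, adj6 y.1 x.1 → x.2 = y.2 + 1 → v ≤ f y) ∧ (x = (m1, 8) → v ≤ a)) := by
  simp only [forall24]
  have hv : ∀ p, v ≤ f p → v ≤ k := fun p h => h.trans (hk p)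
  simp [hiF, adj6]
  grind

lemma lo_spec (a : ℕ) (f : N6 × ℕ → ℕ) (v : ℕ) :
    ∀ x ∈ pos24, (loF a f x ≤ v ↔
      (∀ y ∈ pos24, adj6 x.1 y.1 → y.2 = x.2 + 1 → f y ≤ v) ∧ (x = (m1, 6) → a ≤ v)) := by
  simp only [forall24]
  simp [loF, adj6]

/-- The weight in closed form. -/
def wt6 (a k : ℕ) (j : N6) (f : N6 × ℕ → ℕ) : ℤ :=
  ∑ p ∈ pos24, A6 p.1 j * (f p : ℤ) - if j = m1 then (k + a : ℤ) else 0

lemma wt_eq (a k : ℕ) (j : N6) (f : N6 × ℕ → ℕ) :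
    ∑ p ∈ pos24, (if p.1 = j then (2 * (f p : ℤ) - loF a f p - hiF a k f p) else 0)
      = wt6 a k j f := by
  unfold wt6
  rw [sum24, sum24]
  have key : ∀ x y : ℕ, ((max x y : ℕ) : ℤ) = x + y - (min x y : ℕ) := by
    intro x y; omega
  cases j <;> simp [A6, adj6, loF, hiF, -Nat.cast_max, -Nat.cast_min] <;>
    (try simp only [key]) <;> (try simp only [min_comm]) <;> ring

lemma adj6_irrefl (i : N6) : ¬ adj6 i i := by cases i <;> decide

lemma mwt_eq (a b : ℕ) (j : N6) (t : L6ab a b) :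
    CL.mwt j t = wt6 a (a + b) j (ext0 t.1) := by
  have hk : ∀ p, ext0 t.1 p ≤ a + b := by
    intro p
    unfold ext0
    split_ifs
    · exact t.2.1 _
    · exact Nat.zero_le _
  rw [← wt_eq]
  rw [CL.mwt_box (lo := fun x => loF a (ext0 t.1) x.1)
    (hi := fun x => hiF a (a + b) (ext0 t.1) x.1) t]
  · rw [← Finset.sum_attach pos24]
    apply Finset.sum_congr rfl
    intro x _
    rw [ext0_of t.1 x]
  · intro c hc
    have ht := (CL.valid_iff t.1).1 t.2
    rw [CL.valid_iff]
    constructor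
    · rintro ⟨h1, h2, h3, h4⟩ x hx
      constructor
      · rw [lo_spec _ _ _ _ x.2]
        constructor
        · intro y hy hxy hr
          have := h2 ⟨y, hy⟩ x hxy hr
          rw [hc ⟨y, hy⟩ (by
            rintro h; rw [hx] at hxy; change y.1 = j at h; rw [h] at hxy
            exact adj6_irrefl _ hxy), ext0_of t.1] at this
          exact this
        · intro h
          obtain ⟨x, hx'⟩ := x
          subst h
          exact h4
      · rw [hi_spec _ _ _ hk _ _ x.2]
        refine ⟨h1 x, ?_, ?_⟩
        · intro y hy hxy hr
          have := h2 x ⟨y, hy⟩ hxy hr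
          rw [hc ⟨y, hy⟩ (by
            rintro h; rw [hx] at hxy; change y.1 = j at h; rw [h] at hxy
            exact adj6_irrefl _ hxy), ext0_of t.1] at this
          exact this
        · intro h
          obtain ⟨x, hx'⟩ := x
          subst h
          exact h3
    · intro h
      have hlo := fun x hx => (lo_spec a (ext0 t.1) (c x) x.1 x.2).1 (h x hx).1
      have hhi := fun x hx => (hi_spec a (a + b) (ext0 t.1) hk (c x) x.1 x.2).1 (h x hx).2
      refine ⟨?_, ?_, ?_, ?_⟩
      · intro x
        by_cases hx : x.1.1 = j
        · exact (hhi x hx).1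
        · rw [hc x hx]; exact t.2.1 x
      · intro x y hyx hr
        by_cases hx : x.1.1 = j
        · have hy : y.1.1 ≠ j := by
            intro hy; rw [hx, hy] at hyx; exact adj6_irrefl _ hyx
          rw [hc y hy, ext0_of t.1]
          exact (hhi x hx).2.1 y.1 y.2 hyx hr
        · by_cases hy : y.1.1 = j
          · rw [hc x hx, ext0_of t.1]
            exact (hlo y hy).1 x.1 x.2 hyx hr
          · rw [hc x hx, hc y hy]
            exact ht.2.1 x y hyx hr
      · by_cases hx : m1 = j
        · exact (hhi ⟨(m1, 8), by decide⟩ hx).2.2 rfl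
        · rw [hc ⟨(m1, 8), by decide⟩ hx]; exact ht.2.2.1
      · by_cases hx : m1 = j
        · exact (hlo ⟨(m1, 6), by decide⟩ hx).2 rfl
        · rw [hc ⟨(m1, 6), by decide⟩ hx]; exact ht.2.2.2

lemma wt_edge (a b : ℕ) (i j : N6) (t s : L6ab a b) (h : CL.edge i t s) :
    wt6 a (a + b) j (ext0 s.1) = wt6 a (a + b) j (ext0 t.1) + A6 i j := by
  obtain ⟨x, hx, h1, h2⟩ := h
  unfold wt6
  rw [← Finset.add_sum_erase _ _ x.2,
    ← Finset.add_sum_erase _ (fun p => A6 p.1 j * (ext0 t.1 p : ℤ)) x.2]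
  have : ∑ p ∈ pos24.erase x.1, A6 p.1 j * (ext0 s.1 p : ℤ) =
      ∑ p ∈ pos24.erase x.1, A6 p.1 j * (ext0 t.1 p : ℤ) := by
    apply Finset.sum_congr rfl
    intro p hp
    have hp' := Finset.mem_of_mem_erase hp
    have := h2 ⟨p, hp'⟩ (fun h => Finset.ne_of_mem_erase hp (congrArg Subtype.val h))
    rw [ext0_of s.1, ext0_of t.1] at this
    rw [this]
  rw [this]
  rw [← ext0_of s.1, ← ext0_of t.1, h1, hx]
  push_cast
  ring

/-- The values of the maximal element. -/
def topF (a b : ℕ) (p : N6 × ℕ) : ℕ :=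
  if p = (m1, 8) ∨ p = (m2, 9) ∨ (10 ≤ p.2 ∧ p ≠ (m6, 10)) then a else a + b

/-- The maximal element. -/
def top6 (a b : ℕ) : L6ab a b := ⟨fun x => topF a b x.1, by
  refine (CL.valid_iff _).2 ⟨?_, ?_, ?_, ?_⟩
  · intro x; simp only [topF]; split_ifs <;> omega
  · have : ∀ x ∈ pos24, ∀ y ∈ pos24, adj6 y.1 x.1 → x.2 = y.2 + 1 → topF a b x ≤ topF a b y := by
      simp only [forall24]
      simp [adj6, topF]
    exact fun x y => this x.1 x.2 y.1 y.2
  · simp [topF]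
  · simp [topF]⟩

lemma top6_max (a b : ℕ) (t : L6ab a b) : CL.elLe t (top6 a b) := by
  have ht := (CL.valid_iff t.1).1 t.2
  have h2 : ∀ x ∈ pos24, ∀ y ∈ pos24, adj6 y.1 x.1 → x.2 = y.2 + 1 →
      ext0 t.1 x ≤ ext0 t.1 y := by
    intro x hx y hy
    have := ht.2.1 ⟨x, hx⟩ ⟨y, hy⟩
    rw [ext0_of t.1, ext0_of t.1] at this
    exact this
  have h1 : ∀ x ∈ pos24, ext0 t.1 x ≤ a + b := by
    intro x hx
    have := ht.1 ⟨x, hx⟩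
    rw [ext0_of t.1] at this
    exact this
  have h3 := ht.2.2.1
  rw [ext0_of t.1] at h3
  change ext0 t.1 (m1, 8) ≤ a at h3
  have : ∀ x ∈ pos24, ext0 t.1 x ≤ topF a b x := by
    simp only [forall24] at h1 h2 ⊢
    simp [adj6] at h2
    simp [topF]
    omega
  intro x
  rw [ext0_of t.1]
  exact this x.1 x.2

lemma wt_top (a b : ℕ) (j : N6) : CL.mwt j (top6 a b) =
    if j = m1 then (a : ℤ) else if j = m6 then (b : ℤ) else 0 := by
  rw [mwt_eq]
  have : ∀ x ∈ pos24, ext0 (top6 a b).1 x = topF a b x := by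
    intro x hx
    exact (ext0_of (top6 a b).1 ⟨x, hx⟩).symm
  unfold wt6
  rw [Finset.sum_congr rfl (fun x hx => by rw [this x hx]), sum24]
  cases j <;> simp [A6, adj6, topF] <;> ring

/-- `L6(a,b)` is `E₆`-structured, and its unique maximal element has weight
`aω₁' + bω₆'`. -/
theorem statement_3 (a b : ℕ) :
    (∀ (i : N6) (t s : L6ab a b), CL.edge i t s → ∀ j : N6,
      CL.mwt j s = CL.mwt j t + A6 i j) ∧
    (∃ top : L6ab a b, (∀ t : L6ab a b, CL.elLe t top) ∧
      CL.mwt m1 top = (a : ℤ) ∧ CL.mwt m6 top = (b : ℤ) ∧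
      ∀ j : N6, j ≠ m1 → j ≠ m6 → CL.mwt j top = 0) := by
  refine ⟨fun i t s h j => ?_, top6 a b, top6_max a b, ?_, ?_, ?_⟩
  · rw [mwt_eq, mwt_eq]
    exact wt_edge a b i j t s h
  · simp [wt_top]
  · simp [wt_top]
  · intro j h1 h6
    simp [wt_top, h1, h6]

end
end

section
/- For every nonnegative integer k: the group W is finite, and in the group algebra ℤ[ℤ^6] one has 𝒜(Z^ϱ) · WGF(L6''(k);Z) = 𝒜(Z^{kω_{6'} + ϱ}). (By the Weyl character formula, this says that the weight generating function of L6''(k) equals the character char_{E6}(kω_{6'}) of the irreducible highest-weight-kω_{6'} representation of the type E6 simple Lie algebra.) -/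
noncomputable section

namespace CL

variable {N : Type} [DecidableEq N] [Fintype N]

/-- The matrix of the simple reflection `S_i : μ ↦ μ − μ_i·(row i of A)`, acting via `mulVec`. -/
def refl (A : N → N → ℤ) (i : N) : Matrix N N ℤ :=
  fun j l => (if j = l then 1 else 0) - (if l = i then A i j else 0)

/-- The Weyl group: the group of integer matrices generated by the simple reflections
(each `S_i` is an involution, so the generated submonoid is a group). -/
def weyl (A : N → N → ℤ) : Submonoid (Matrix N N ℤ) :=
  Submonoid.closure (Set.range (refl A))

/-- The alternant `𝒜(Z^ν) = Σ_{w∈W} det(w)·Z^{w(ν)}` in the group algebra `ℤ[ℤ^N]`. -/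
def alt (A : N → N → ℤ) (ν : N → ℤ) : AddMonoidAlgebra ℤ (N → ℤ) :=
  ∑ᶠ w ∈ (weyl A : Set (Matrix N N ℤ)),
    AddMonoidAlgebra.single (Matrix.mulVec w ν) (Matrix.det w)

end CL

namespace CL

variable {N : Type} [DecidableEq N] [Fintype N]

/-- The weight generating function `WGF(L;Z) = Σ_{t∈L} Z^{wt(t)}` in `ℤ[ℤ^N]`. -/
def wgf (adj : N → N → Prop) (pos : Finset (N × ℕ)) (k : ℕ)
    (extra : ({x : N × ℕ // x ∈ pos} → ℕ) → Prop) : AddMonoidAlgebra ℤ (N → ℤ) :=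
  ∑ t : Elt adj pos k extra, AddMonoidAlgebra.single (fun i => mwt i t) 1

end CL

open N6

/-! ### Concrete coordinates on `L6''(k)` -/

namespace E6P

/-- Colors of the sixteen positions. -/
def col : Fin 16 → N6 :=
  ![m1, m2, m3, m4, m5, m3, m6, m2, m5, m1, m3, m2, m4, m3, m5, m6]

/-- Ranks of the sixteen positions. -/
def lev : Fin 16 → ℕ := ![0, 1, 2, 3, 3, 4, 4, 5, 5, 6, 6, 7, 7, 8, 9, 10]

lemma qmem : ∀ j, (col j, lev j) ∈ pos16pp := by decide

/-- Enumeration of the positions. -/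
def qe (j : Fin 16) : {x : N6 × ℕ // x ∈ pos16pp} := ⟨(col j, lev j), qmem j⟩

lemma qe_inj : ∀ a b : Fin 16, (col a, lev a) = (col b, lev b) → a = b := by decide

lemma qe_surj : ∀ x ∈ pos16pp, ∃ j : Fin 16, (col j, lev j) = x := by decide

lemma qe_bij : Function.Bijective qe := by
  constructor
  · intro a b h
    exact qe_inj a b (congrArg Subtype.val h)
  · rintro ⟨x, hx⟩
    obtain ⟨j, hj⟩ := qe_surj x hx
    exact ⟨j, Subtype.ext hj⟩

/-- The enumeration as an equivalence. -/
def qq : Fin 16 ≃ {x : N6 × ℕ // x ∈ pos16pp} := Equiv.ofBijective qe qe_bij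

/-- Covering relations of the poset. -/
def covers : List (Fin 16 × Fin 16) :=
  [(0, 1), (1, 2), (2, 3), (2, 4), (3, 5), (4, 5), (4, 6), (5, 7), (5, 8), (6, 8), (7, 9),
   (7, 10), (8, 10), (9, 11), (10, 11), (10, 12), (11, 13), (12, 13), (13, 14), (14, 15)]

lemma step_covers : ∀ a b : Fin 16, adj6 (col a) (col b) → lev b = lev a + 1 →
    (a, b) ∈ covers := by
  set_option maxRecDepth 10000 in decide

lemma covers_step : ∀ p ∈ covers, adj6 (col p.1) (col p.2) ∧ lev p.2 = lev p.1 + 1 := by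
  set_option maxRecDepth 10000 in decide

lemma covers_col : ∀ p ∈ covers, col p.1 ≠ col p.2 := by
  set_option maxRecDepth 10000 in decide

lemma covers_lt : ∀ p ∈ covers, p.1.1 < p.2.1 := by
  set_option maxRecDepth 10000 in decide

/-- Validity of a coordinate vector. -/
def V (k : ℕ) (v : Fin 16 → ℕ) : Prop := (∀ j, v j ≤ k) ∧ ∀ p ∈ covers, v p.2 ≤ v p.1

lemma V_iff (k : ℕ) (v : Fin 16 → ℕ) : V k v ↔
    (v 0 ≤ k ∧ v 1 ≤ v 0 ∧ v 2 ≤ v 1 ∧ v 3 ≤ v 2 ∧ v 4 ≤ v 2 ∧ v 5 ≤ v 3 ∧ v 5 ≤ v 4 ∧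
     v 6 ≤ v 4 ∧ v 7 ≤ v 5 ∧ v 8 ≤ v 5 ∧ v 8 ≤ v 6 ∧ v 9 ≤ v 7 ∧ v 10 ≤ v 7 ∧ v 10 ≤ v 8 ∧
     v 11 ≤ v 9 ∧ v 11 ≤ v 10 ∧ v 12 ≤ v 10 ∧ v 13 ≤ v 11 ∧ v 13 ≤ v 12 ∧ v 14 ≤ v 13 ∧
     v 15 ≤ v 14) := by
  unfold V
  constructor
  · rintro ⟨h0, h⟩
    refine ⟨h0 0, ?_⟩
    simpa [covers] using h
  · rintro ⟨h0, h⟩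
    refine ⟨?_, ?_⟩
    · intro j
      fin_cases j <;> simp only [Fin.zero_eta, Fin.mk_one, Fin.reduceFinMk] <;> omega
    · simpa [covers] using h

variable {k : ℕ}

/-- Coordinates of an element. -/
def vv (t : L6pp k) (j : Fin 16) : ℕ := t.1 (qq j)

lemma vv_V (t : L6pp k) : V k (vv t) := by
  refine ⟨fun j => t.2.1 _, fun p hp => ?_⟩
  refine t.2.2.1 _ _ (Relation.ReflTransGen.single ?_)
  exact ⟨(qq p.1).2, (qq p.2).2, (covers_step p hp).1, (covers_step p hp).2⟩

lemma ext_vv {s t : L6pp k} (h : vv s = vv t) : s = t := by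
  apply Subtype.ext
  funext x
  have := congrFun h (qq.symm x)
  simpa [vv] using this

/-- Build an element from coordinates. -/
def mk (v : Fin 16 → ℕ) (h : V k v) : L6pp k :=
  ⟨fun x => v (qq.symm x), fun x => h.1 _, by
    have key : ∀ a b : N6 × ℕ, CL.ple adj6 pos16pp a b → ∀ (ha : a ∈ pos16pp)
        (hb : b ∈ pos16pp), v (qq.symm ⟨b, hb⟩) ≤ v (qq.symm ⟨a, ha⟩) := by
      intro a b hab
      induction hab with
      | refl => intro ha hb; exact le_rfl
      | tail _ hst ih =>
        intro ha hb
        refine le_trans ?_ (ih ha hst.1)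
        rename_i b' c' _
        obtain ⟨x, hx⟩ := qq.surjective ⟨b', hst.1⟩
        obtain ⟨y, hy⟩ := qq.surjective ⟨c', hb⟩
        rw [← hx, ← hy, Equiv.symm_apply_apply, Equiv.symm_apply_apply]
        have hx' : (col x, lev x) = b' := congrArg Subtype.val hx
        have hy' : (col y, lev y) = c' := congrArg Subtype.val hy
        refine h.2 (x, y) (step_covers x y ?_ ?_)
        · have := hst.2.2.1
          rw [← hx', ← hy'] at this
          exact this
        · have := hst.2.2.2
          rw [← hx', ← hy'] at this
          exact this
    exact ⟨fun x y hxy => key _ _ hxy y.2 x.2, trivial⟩⟩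

@[simp] lemma vv_mk (v : Fin 16 → ℕ) (h : V k v) : vv (mk v h) = v := by
  funext j
  simp [vv, mk]

lemma rk_eq (t : L6pp k) : CL.rk t = ∑ j, vv t j := by
  unfold CL.rk vv
  rw [← Finset.univ_eq_attach]
  exact (Equiv.sum_comp qq t.1).symm

lemma edge_of (i : N6) (s t : L6pp k) (j : Fin 16) (hj : col j = i)
    (h1 : vv t j = vv s j + 1) (h2 : ∀ l, l ≠ j → vv t l = vv s l) : CL.edge i s t := by
  refine ⟨qq j, hj, h1, ?_⟩
  intro y hy
  have := h2 (qq.symm y) (by rintro rfl; simp at hy)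
  simpa [vv] using this

lemma edge_off {i : N6} {s t : L6pp k} (h : CL.edge i s t) (l : Fin 16) (hl : col l ≠ i) :
    vv s l = vv t l := by
  obtain ⟨x, hx, _, h2⟩ := h
  refine (h2 (qq l) ?_).symm
  rintro rfl
  exact hl hx

lemma comp_off {i : N6} {s t : L6pp k} (h : s ∈ CL.comp i t) (l : Fin 16) (hl : col l ≠ i) :
    vv s l = vv t l := by
  unfold CL.comp at h
  simp only [Set.mem_ofPred_eq] at h
  induction h with
  | refl => rfl
  | tail _ h ih =>
    rw [← ih]
    rcases h with h | h
    · exact (edge_off h l hl).symm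
    · exact edge_off h l hl

lemma reach (i : N6) (n : ℕ) : ∀ s t : L6pp k, (∑ j, vv t j) = (∑ j, vv s j) + n →
    (∀ j, vv s j ≤ vv t j) → (∀ j, col j ≠ i → vv s j = vv t j) →
    Relation.ReflTransGen (fun a b : L6pp k => CL.edge i a b) s t := by
  induction n with
  | zero =>
    intro s t hs hle _
    have : s = t := by
      apply ext_vv
      funext j
      exact (Finset.sum_eq_sum_iff_of_le (fun j _ => hle j)).1 (by omega) j (Finset.mem_univ j)
    rw [this]
  | succ n ih =>
    intro s t hs hle hoff
    have : ∃ j ∈ Finset.univ, vv s j < vv t j := Finset.exists_lt_of_sum_lt (by omega)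
    obtain ⟨j, -, hj⟩ := this
    have hcj : col j = i := by
      by_contra h
      have := hoff j h
      omega
    have hV : V k (Function.update (vv t) j (vv t j - 1)) := by
      have ht := vv_V t
      have hs' := vv_V s
      refine ⟨fun l => ?_, fun p hp => ?_⟩
      · have := ht.1 l
        by_cases hl : l = j
        · subst hl; simp; omega
        · simp [hl, this]
      · have h1 := ht.2 p hp
        have h2 := hs'.2 p hp
        have h3 := covers_col p hp
        by_cases hb : p.1 = j
        · have h4 : p.2 ≠ j := by
            intro h; apply h3; rw [hb, h]
          have h5 := hoff p.2 (by rw [← hcj, ← hb]; exact h3.symm)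
          rw [Function.update_of_ne h4, hb, Function.update_self]
          rw [hb] at h2
          omega
        · rw [Function.update_of_ne hb]
          by_cases h4 : p.2 = j
          · rw [h4, Function.update_self]
            rw [h4] at h1
            omega
          · rw [Function.update_of_ne h4]; exact h1
    have hedge : CL.edge i (mk _ hV) t := by
      apply edge_of i _ _ j hcj
      · simp; omega
      · intro l hl
        simp [hl]
    refine Relation.ReflTransGen.tail (ih s (mk _ hV) ?_ ?_ ?_) hedge
    · have e1 : ∑ l, Function.update (vv t) j (vv t j - 1) l + 1 = ∑ l, vv t l := by
        rw [Finset.sum_update_of_mem (Finset.mem_univ j),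
          ← Finset.add_sum_erase _ (vv t) (Finset.mem_univ j), Finset.sdiff_singleton_eq_erase]
        omega
      rw [vv_mk]
      omega
    · intro l
      rw [vv_mk]
      by_cases hl : l = j
      · subst hl; simp; omega
      · simp [hl, hle l]
    · intro l hl
      rw [vv_mk]
      have : l ≠ j := by rintro rfl; exact hl hcj
      simp [this, hoff l hl]

lemma mem_comp_up (i : N6) (s t : L6pp k) (h1 : ∀ j, vv s j ≤ vv t j)
    (h2 : ∀ j, col j ≠ i → vv s j = vv t j) : t ∈ CL.comp i s := by
  have hsum : ∑ j, vv s j ≤ ∑ j, vv t j := Finset.sum_le_sum (fun j _ => h1 j)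
  have := reach i (∑ j, vv t j - ∑ j, vv s j) s t (by omega) h1 h2
  exact Relation.ReflTransGen.mono (fun a b h => Or.inl h) _ _ this

lemma mem_comp_down (i : N6) (s t : L6pp k) (h1 : ∀ j, vv s j ≤ vv t j)
    (h2 : ∀ j, col j ≠ i → vv s j = vv t j) : s ∈ CL.comp i t := by
  have hsum : ∑ j, vv s j ≤ ∑ j, vv t j := Finset.sum_le_sum (fun j _ => h1 j)
  have := reach i (∑ j, vv t j - ∑ j, vv s j) s t (by omega) h1 h2
  have h3 := Relation.reflTransGen_swap.2 this
  exact Relation.ReflTransGen.mono (fun a b h => Or.inr h) _ _ h3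

/-- Lower bounds: maximum over upper covers. -/
def lo (v : Fin 16 → ℕ) : Fin 16 → ℕ :=
  ![v 1, v 2, max (v 3) (v 4), v 5, max (v 5) (v 6), max (v 7) (v 8), v 8, max (v 9) (v 10),
    v 10, v 11, max (v 11) (v 12), v 13, v 13, v 14, v 15, 0]

/-- Upper bounds: minimum over lower covers. -/
def hi (k : ℕ) (v : Fin 16 → ℕ) : Fin 16 → ℕ :=
  ![k, v 0, v 1, v 2, v 2, min (v 3) (v 4), v 4, v 5, min (v 5) (v 6), v 7, min (v 7) (v 8),
    min (v 9) (v 10), v 10, min (v 11) (v 12), v 13, v 14]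

/-- The (linear) weight. -/
def wv (k : ℕ) (v : Fin 16 → ℕ) : N6 → ℤ
  | m1 => 2 * ((v 0 : ℤ) + v 9) - (v 1 + v 7 + v 11) - k
  | m2 => 2 * ((v 1 : ℤ) + v 7 + v 11) - (v 0 + v 9) - (v 2 + v 5 + v 10 + v 13)
  | m3 => 2 * ((v 2 : ℤ) + v 5 + v 10 + v 13) - (v 1 + v 7 + v 11) - (v 3 + v 12)
      - (v 4 + v 8 + v 14)
  | m4 => 2 * ((v 3 : ℤ) + v 12) - (v 2 + v 5 + v 10 + v 13)
  | m5 => 2 * ((v 4 : ℤ) + v 8 + v 14) - (v 2 + v 5 + v 10 + v 13) - (v 6 + v 15)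
  | m6 => 2 * ((v 6 : ℤ) + v 15) - (v 4 + v 8 + v 14)

lemma V_bounds {v : Fin 16 → ℕ} (h : V k v) (j : Fin 16) : lo v j ≤ v j ∧ v j ≤ hi k v j := by
  rw [V_iff] at h
  fin_cases j <;> simp [lo, hi] <;> omega

/-- Replace the entries of color `i`. -/
def repl (i : N6) (v u : Fin 16 → ℕ) (j : Fin 16) : ℕ := if col j = i then u j else v j

lemma V_lo (i : N6) {v : Fin 16 → ℕ} (h : V k v) : V k (repl i v (lo v)) := by
  rw [V_iff] at h ⊢
  cases i <;> simp [repl, col, lo] <;> omega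

lemma V_hi (i : N6) {v : Fin 16 → ℕ} (h : V k v) : V k (repl i v (hi k v)) := by
  rw [V_iff] at h ⊢
  cases i <;> simp [repl, col, hi] <;> omega

lemma lo_congr (i : N6) (u v : Fin 16 → ℕ) (h : ∀ j, col j ≠ i → u j = v j) :
    ∀ j, col j = i → lo u j = lo v j := by

  intro j hj
  subst hj
  fin_cases j <;> simp [Fin.forall_fin_succ, col, lo] at h ⊢ <;> omega

lemma hi_congr (i : N6) (u v : Fin 16 → ℕ) (h : ∀ j, col j ≠ i → u j = v j) :
    ∀ j, col j = i → hi k u j = hi k v j := by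
  intro j hj
  subst hj
  fin_cases j <;> simp [Fin.forall_fin_succ, col, hi] at h ⊢ <;> omega

lemma sum16 (f : Fin 16 → ℕ) : ∑ j, f j = f 0 + f 1 + f 2 + f 3 + f 4 + f 5 + f 6 + f 7 + f 8
    + f 9 + f 10 + f 11 + f 12 + f 13 + f 14 + f 15 := by
  simp only [Fin.sum_univ_castSucc, Finset.univ_eq_empty, Finset.sum_empty, zero_add]
  rfl

lemma wv_sum (i : N6) {v : Fin 16 → ℕ} (h : V k v) :
    wv k v i = 2 * ((∑ j, v j : ℕ) : ℤ) - ((∑ j, repl i v (lo v) j : ℕ) : ℤ)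
      - ((∑ j, repl i v (hi k v) j : ℕ) : ℤ) := by
  rw [V_iff] at h
  rw [sum16, sum16, sum16]
  cases i <;> simp [repl, col, hi, lo, wv] <;> omega

lemma mwt_eq (i : N6) (t : L6pp k) : CL.mwt i t = wv k (vv t) i := by
  have hV := vv_V t
  have hlo : sInf (CL.rk '' CL.comp i t) = ∑ j, repl i (vv t) (lo (vv t)) j := by
    apply IsLeast.csInf_eq
    constructor
    · refine ⟨mk _ (V_lo i hV), mem_comp_down i _ _ ?_ ?_, by rw [rk_eq, vv_mk]⟩
      · intro j
        rw [vv_mk, repl]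
        split_ifs
        · exact (V_bounds hV j).1
        · exact le_rfl
      · intro j hj
        rw [vv_mk, repl, if_neg hj]
    · rintro _ ⟨s, hs, rfl⟩
      rw [rk_eq]
      refine Finset.sum_le_sum (fun j _ => ?_)
      rw [repl]
      split_ifs with hj
      · rw [← lo_congr i (vv s) (vv t) (comp_off hs) j hj]
        exact (V_bounds (vv_V s) j).1
      · exact (comp_off hs j hj).ge
  have hhi : sSup (CL.rk '' CL.comp i t) = ∑ j, repl i (vv t) (hi k (vv t)) j := by
    apply IsGreatest.csSup_eq
    constructor
    · refine ⟨mk _ (V_hi i hV), mem_comp_up i _ _ ?_ ?_, by rw [rk_eq, vv_mk]⟩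
      · intro j
        rw [vv_mk, repl]
        split_ifs
        · exact (V_bounds hV j).2
        · exact le_rfl
      · intro j hj
        rw [vv_mk, repl, if_neg hj]
    · rintro _ ⟨s, hs, rfl⟩
      rw [rk_eq]
      refine Finset.sum_le_sum (fun j _ => ?_)
      rw [repl]
      split_ifs with hj
      · rw [← hi_congr i (vv s) (vv t) (comp_off hs) j hj]
        exact (V_bounds (vv_V s) j).2
      · exact (comp_off hs j hj).le
  rw [CL.mwt, hlo, hhi, wv_sum i hV, rk_eq]
  ring

/-! ### Reflections -/

/-- Reflection in color `i`, acting on the positions from `j₀` on, with upper bounds capped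
at `K`. -/
def rf (k K : ℕ) (j₀ : Fin 16) (i : N6) (v : Fin 16 → ℕ) (j : Fin 16) : ℕ :=
  if col j = i ∧ j₀ ≤ j then lo v j + min K (hi k v j) - v j else v j

/-! ### The Weyl group -/

lemma refl_mulVec (i : N6) (μ : N6 → ℤ) (j : N6) :
    Matrix.mulVec (CL.refl A6 i) μ j = μ j - μ i * A6 i j := by
  simp only [Matrix.mulVec, dotProduct, CL.refl, sub_mul, ite_mul, one_mul, zero_mul,
    Finset.sum_sub_distrib, Finset.sum_ite_eq, Finset.sum_ite_eq', Finset.mem_univ, if_true]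
  ring

lemma A6_diag (i : N6) : A6 i i = 2 := by simp [A6]

lemma refl_sq (i : N6) : CL.refl A6 i * CL.refl A6 i = 1 := by
  rw [← Matrix.mulVec_injective.eq_iff]
  funext μ
  rw [← Matrix.mulVec_mulVec, Matrix.one_mulVec]
  funext j
  rw [refl_mulVec, refl_mulVec, refl_mulVec, A6_diag]
  ring

lemma refl_det (i : N6) : (CL.refl A6 i).det = -1 := by
  have : CL.refl A6 i = 1 + Matrix.replicateCol Unit (fun j => - A6 i j) *
      Matrix.replicateRow Unit (Pi.single i (1 : ℤ)) := by
    ext j l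
    simp [CL.refl, Matrix.one_apply, Matrix.mul_apply, Pi.single_apply]
    split_ifs <;> ring
  rw [this, Matrix.det_one_add_replicateCol_mul_replicateRow]
  simp [A6_diag]

lemma refl_mem (i : N6) : CL.refl A6 i ∈ CL.weyl A6 :=
  Submonoid.subset_closure ⟨i, rfl⟩

lemma A6_m1 (j : N6) : A6 m1 j = match j with
  | m1 => 2 | m2 => -1 | m3 => 0 | m4 => 0 | m5 => 0 | m6 => 0 := by
  cases j <;> decide

lemma A6_m2 (j : N6) : A6 m2 j = match j with
  | m1 => -1 | m2 => 2 | m3 => -1 | m4 => 0 | m5 => 0 | m6 => 0 := by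
  cases j <;> decide

lemma A6_m3 (j : N6) : A6 m3 j = match j with
  | m1 => 0 | m2 => -1 | m3 => 2 | m4 => -1 | m5 => -1 | m6 => 0 := by
  cases j <;> decide

lemma A6_m4 (j : N6) : A6 m4 j = match j with
  | m1 => 0 | m2 => 0 | m3 => -1 | m4 => 2 | m5 => 0 | m6 => 0 := by
  cases j <;> decide

lemma A6_m5 (j : N6) : A6 m5 j = match j with
  | m1 => 0 | m2 => 0 | m3 => -1 | m4 => 0 | m5 => 2 | m6 => -1 := by
  cases j <;> decide

lemma A6_m6 (j : N6) : A6 m6 j = match j with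
  | m1 => 0 | m2 => 0 | m3 => 0 | m4 => 0 | m5 => -1 | m6 => 2 := by
  cases j <;> decide

lemma covers_lohi (v : Fin 16 → ℕ) : ∀ p ∈ covers, v p.2 ≤ lo v p.1 ∧ hi k v p.2 ≤ v p.1 := by
  simp [covers, lo, hi]

lemma hi_le {v : Fin 16 → ℕ} (h : V k v) (j : Fin 16) : hi k v j ≤ k := by
  have h1 := h.1
  fin_cases j <;> simp [hi, h1]

lemma V_of_bounds (i : N6) {u v : Fin 16 → ℕ} (h : V k v) (hoff : ∀ j, col j ≠ i → u j = v j)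
    (hon : ∀ j, col j = i → lo v j ≤ u j ∧ u j ≤ hi k v j) : V k u := by
  refine ⟨fun j => ?_, fun p hp => ?_⟩
  · by_cases hj : col j = i
    · exact (hon j hj).2.trans (hi_le h j)
    · rw [hoff j hj]; exact h.1 j
  · have h1 := covers_lohi (k := k) v p hp
    have h2 := covers_col p hp
    by_cases ha : col p.1 = i
    · rw [hoff p.2 (by rw [← ha]; exact h2.symm)]
      exact h1.1.trans (hon _ ha).1
    · rw [hoff p.1 ha]
      by_cases hb : col p.2 = i
      · exact (hon _ hb).2.trans h1.2
      · rw [hoff p.2 hb]; exact h.2 p hp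

lemma rf_V (K : ℕ) (j₀ : Fin 16) (i : N6) {v : Fin 16 → ℕ} (h : V k v)
    (hK : ∀ j, col j = i → j₀ ≤ j → v j ≤ K) : V k (rf k K j₀ i v) := by
  refine V_of_bounds i h (fun l hl => if_neg fun h => hl h.1) (fun j hj => ?_)
  have h1 := V_bounds h j
  rw [rf]
  split_ifs with hc
  · have := hK j hj hc.2
    omega
  · exact h1

/-- The sum of the entries of color `i`. -/
def sg (v : Fin 16 → ℕ) : N6 → ℤ
  | m1 => (v 0 : ℤ) + v 9
  | m2 => (v 1 : ℤ) + v 7 + v 11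
  | m3 => (v 2 : ℤ) + v 5 + v 10 + v 13
  | m4 => (v 3 : ℤ) + v 12
  | m5 => (v 4 : ℤ) + v 8 + v 14
  | m6 => (v 6 : ℤ) + v 15

lemma sg_off (i j : N6) (hij : j ≠ i) {u v : Fin 16 → ℕ} (hoff : ∀ j, col j ≠ i → u j = v j) :
    sg u j = sg v j := by
  have h : ∀ l, col l = j → u l = v l := fun l hl => hoff l (hl ▸ hij)
  clear hoff
  cases j <;> simp [Fin.forall_fin_succ, col] at h <;> simp [sg, h]

lemma wv_sg (v : Fin 16 → ℕ) (j : N6) :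
    wv k v j = A6 m1 j * sg v m1 + A6 m2 j * sg v m2 + A6 m3 j * sg v m3 + A6 m4 j * sg v m4
      + A6 m5 j * sg v m5 + A6 m6 j * sg v m6 - (if j = m1 then (k : ℤ) else 0) := by
  cases j <;> simp [A6_m1, A6_m2, A6_m3, A6_m4, A6_m5, A6_m6, sg, wv] <;> ring

lemma wv_diff (i : N6) {u v : Fin 16 → ℕ} (hoff : ∀ j, col j ≠ i → u j = v j) (j : N6) :
    wv k u j = wv k v j + A6 i j * (sg u i - sg v i) := by
  have h := fun l hl => sg_off i l hl hoff
  rw [wv_sg, wv_sg]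
  cases i
  · rw [h m2 (by decide), h m3 (by decide), h m4 (by decide), h m5 (by decide), h m6 (by decide)]
    ring
  · rw [h m1 (by decide), h m3 (by decide), h m4 (by decide), h m5 (by decide), h m6 (by decide)]
    ring
  · rw [h m1 (by decide), h m2 (by decide), h m4 (by decide), h m5 (by decide), h m6 (by decide)]
    ring
  · rw [h m1 (by decide), h m2 (by decide), h m3 (by decide), h m5 (by decide), h m6 (by decide)]
    ring
  · rw [h m1 (by decide), h m2 (by decide), h m3 (by decide), h m4 (by decide), h m6 (by decide)]
    ring
  · rw [h m1 (by decide), h m2 (by decide), h m3 (by decide), h m4 (by decide), h m5 (by decide)]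
    ring

lemma rf_off (K : ℕ) (j₀ : Fin 16) (i : N6) (v : Fin 16 → ℕ) (l : Fin 16) (hl : col l ≠ i) :
    rf k K j₀ i v l = v l := if_neg fun h => hl h.1

lemma lo_rf (K : ℕ) (j₀ : Fin 16) (i : N6) (v : Fin 16 → ℕ) (j : Fin 16) (hj : col j = i) :
    lo (rf k K j₀ i v) j = lo v j :=
  lo_congr i _ _ (fun l hl => if_neg fun h => hl h.1) j hj

lemma hi_rf (K : ℕ) (j₀ : Fin 16) (i : N6) (v : Fin 16 → ℕ) (j : Fin 16) (hj : col j = i) :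
    hi k (rf k K j₀ i v) j = hi k v j :=
  hi_congr i _ _ (fun l hl => if_neg fun h => hl h.1) j hj

lemma rf_rf (K : ℕ) (j₀ : Fin 16) (i : N6) {v : Fin 16 → ℕ} (h : V k v)
    (hK : ∀ j, col j = i → j₀ ≤ j → v j ≤ K) : rf k K j₀ i (rf k K j₀ i v) = v := by
  funext j
  by_cases hj : col j = i ∧ j₀ ≤ j
  · have h1 := V_bounds h j
    have h2 := hK j hj.1 hj.2
    rw [rf, if_pos hj, lo_rf K j₀ i v j hj.1, hi_rf K j₀ i v j hj.1, rf, if_pos hj]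
    omega
  · rw [rf, if_neg hj, rf, if_neg hj]

lemma rf_full_sg (i : N6) {v : Fin 16 → ℕ} (h : V k v) :
    sg (rf k k 0 i v) i = sg v i - wv k v i := by
  rw [V_iff] at h
  cases i <;> simp [rf, col, lo, hi, wv, sg] <;> omega

lemma rf_full_wv (i : N6) {v : Fin 16 → ℕ} (h : V k v) :
    wv k (rf k k 0 i v) = Matrix.mulVec (CL.refl A6 i) (wv k v) := by
  funext j
  rw [refl_mulVec, wv_diff i (rf_off k 0 i v) j, rf_full_sg i h]
  ring

lemma rf_full (i : N6) {v : Fin 16 → ℕ} (h : V k v) :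
    V k (rf k k 0 i v) ∧ rf k k 0 i (rf k k 0 i v) = v ∧
      wv k (rf k k 0 i v) = Matrix.mulVec (CL.refl A6 i) (wv k v) :=
  ⟨rf_V k 0 i h (fun j _ _ => h.1 j), rf_rf k 0 i h (fun j _ _ => h.1 j), rf_full_wv i h⟩

/-- Elements for which `j₀` is the first position with value less than `k`. -/
def First (k : ℕ) (j₀ : Fin 16) (v : Fin 16 → ℕ) : Prop :=
  (∀ j, j < j₀ → v j = k) ∧ v j₀ < k

lemma first_lt (j₀ : Fin 16) {v : Fin 16 → ℕ} (h : V k v) (hf : First k j₀ v) (j : Fin 16)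
    (hj : col j = col j₀) (hl : j₀ ≤ j) : v j < k := by
  rw [V_iff] at h
  have h2 := hf.2
  fin_cases j₀ <;> fin_cases j <;> simp [col] at hj hl h2 ⊢ <;> omega

lemma first_le (j₀ : Fin 16) {v : Fin 16 → ℕ} (h : V k v) (hf : First k j₀ v) (j : Fin 16)
    (hj : col j = col j₀) (hl : j₀ ≤ j) : v j ≤ k - 1 := by
  have := first_lt j₀ h hf j hj hl
  omega

set_option maxHeartbeats 2000000 in
lemma first_before (j₀ : Fin 16) {v : Fin 16 → ℕ} (hf : First k j₀ v) (h : V k v) (j : Fin 16)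
    (hj : col j = col j₀) (hl : j < j₀) : lo v j = k := by
  have h1 := hf.1
  have h3 := h.1
  clear h hf
  fin_cases j₀ <;> fin_cases j <;> simp [col] at hj hl <;>
    simp [Fin.forall_fin_succ] at h1 h3 <;> simp [lo] <;> omega

set_option maxHeartbeats 2000000 in
lemma first_at (j₀ : Fin 16) {v : Fin 16 → ℕ} (hf : First k j₀ v) : hi k v j₀ = k := by
  have h1 := hf.1
  clear hf
  fin_cases j₀ <;> simp [Fin.forall_fin_succ] at h1 <;> simp [hi] <;> omega

lemma hi_after (j₀ : Fin 16) {v : Fin 16 → ℕ} (h : V k v) (j : Fin 16)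
    (hj : col j = col j₀) (hl : j₀ < j) : hi k v j ≤ v j₀ := by
  rw [V_iff] at h
  fin_cases j₀ <;> fin_cases j <;> simp [col] at hj hl <;> simp [hi] <;> omega

lemma sg_add_one (j₀ : Fin 16) {u w : Fin 16 → ℕ}
    (h : ∀ j, col j = col j₀ → u j + (if j = j₀ then 1 else 0) = w j) :
    sg u (col j₀) = sg w (col j₀) - 1 := by
  fin_cases j₀ <;> simp [Fin.forall_fin_succ, col] at h <;> simp [sg, col] <;> omega

lemma rf_first_sg (j₀ : Fin 16) {v : Fin 16 → ℕ} (h : V k v) (hf : First k j₀ v) :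
    sg (rf k (k - 1) j₀ (col j₀) v) (col j₀) =
      sg v (col j₀) - (1 + wv k v (col j₀)) := by
  have h1 := rf_full_sg (col j₀) h
  have h2 : sg (rf k (k - 1) j₀ (col j₀) v) (col j₀) = sg (rf k k 0 (col j₀) v) (col j₀) - 1 := by
    apply sg_add_one
    intro j hj
    have hb := V_bounds h j
    have hk := hi_le h j
    have hf2 := hf.2
    rw [rf, rf, if_pos (show col j = col j₀ ∧ 0 ≤ j from ⟨hj, Fin.zero_le j⟩)]
    rcases lt_trichotomy j j₀ with hl | hl | hl
    · have a := first_before j₀ hf h j hj hl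
      have b := hf.1 j hl
      rw [if_neg (fun h => absurd hl (not_lt.2 h.2)), if_neg hl.ne]
      omega
    · subst hl
      have a := first_at j hf
      rw [if_pos ⟨rfl, le_rfl⟩, if_pos rfl]
      omega
    · have a := hi_after j₀ h j hj hl
      rw [if_pos ⟨hj, hl.le⟩, if_neg hl.ne']
      omega
  rw [h2, h1]
  ring

lemma rf_first_wv (j₀ : Fin 16) {v : Fin 16 → ℕ} (h : V k v) (hf : First k j₀ v) :
    (fun j => 1 + wv k (rf k (k - 1) j₀ (col j₀) v) j) =
        Matrix.mulVec (CL.refl A6 (col j₀)) (fun j => 1 + wv k v j) := by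
  funext j
  rw [refl_mulVec, wv_diff (col j₀) (rf_off (k - 1) j₀ (col j₀) v) j, rf_first_sg j₀ h hf]
  ring

lemma rf_first (j₀ : Fin 16) {v : Fin 16 → ℕ} (h : V k v) (hf : First k j₀ v) :
    V k (rf k (k - 1) j₀ (col j₀) v) ∧ First k j₀ (rf k (k - 1) j₀ (col j₀) v) ∧
      rf k (k - 1) j₀ (col j₀) (rf k (k - 1) j₀ (col j₀) v) = v ∧
      (fun j => 1 + wv k (rf k (k - 1) j₀ (col j₀) v) j) =
        Matrix.mulVec (CL.refl A6 (col j₀)) (fun j => 1 + wv k v j) := by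
  refine ⟨rf_V (k - 1) j₀ (col j₀) h (first_le j₀ h hf), ⟨fun j hj => ?_, ?_⟩,
    rf_rf (k - 1) j₀ (col j₀) h (first_le j₀ h hf), rf_first_wv j₀ h hf⟩
  · rw [rf, if_neg (fun h => absurd hj (not_lt.2 h.2))]
    exact hf.1 j hj
  · have h1 := V_bounds h j₀
    have h2 := hf.2
    rw [rf, if_pos ⟨rfl, le_rfl⟩]
    omega

/-- Every Weyl group element permutes the multiset of weights. -/
lemma weyl_act (k : ℕ) (w : Matrix N6 N6 ℤ) (hw : w ∈ CL.weyl A6) :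
    ∃ e : L6pp k ≃ L6pp k, ∀ t, wv k (vv (e t)) = w.mulVec (wv k (vv t)) := by
  induction hw using Submonoid.closure_induction with
  | mem x hx =>
    obtain ⟨i, rfl⟩ := hx
    have hinv : Function.Involutive (fun t : L6pp k => mk _ (rf_full i (vv_V t)).1) := by
      intro t
      apply ext_vv
      simp only [vv_mk]
      exact (rf_full i (vv_V t)).2.1
    refine ⟨hinv.toPerm, fun t => ?_⟩
    change wv k (vv (mk _ (rf_full i (vv_V t)).1)) = _
    rw [vv_mk]
    exact (rf_full i (vv_V t)).2.2
  | one => exact ⟨Equiv.refl _, fun t => by simp⟩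
  | mul x y _ _ hx hy =>
    obtain ⟨e, he⟩ := hx
    obtain ⟨f, hf⟩ := hy
    refine ⟨f.trans e, fun t => ?_⟩
    rw [Equiv.trans_apply, he, hf, Matrix.mulVec_mulVec]

lemma V_init (n : ℕ) : V 1 (fun j : Fin 16 => if j.1 < n then 1 else 0) := by
  constructor
  · intro j
    dsimp only
    split_ifs <;> omega
  · intro p hp
    have := covers_lt p hp
    dsimp only
    split_ifs <;> omega

lemma weyl_ext (w w' : Matrix N6 N6 ℤ)
    (h : ∀ t : L6pp 1, w.mulVec (wv 1 (vv t)) = w'.mulVec (wv 1 (vv t))) : w = w' := by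
  have hn := fun n => h (mk _ (V_init n))
  simp only [vv_mk] at hn
  have hsum : ∀ f : N6 → ℤ, ∑ x, f x = f m1 + f m2 + f m3 + f m4 + f m5 + f m6 := by
    intro f
    change ∑ x ∈ ({m1, m2, m3, m4, m5, m6} : Finset N6), f x = _
    simp
    ring
  ext r c
  have h0 := congrFun (hn 0) r
  have h1 := congrFun (hn 1) r
  have h2 := congrFun (hn 2) r
  have h3 := congrFun (hn 3) r
  have h4 := congrFun (hn 4) r
  have h5 := congrFun (hn 5) r
  have h6 := congrFun (hn 6) r
  have h7 := congrFun (hn 7) r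
  simp [Matrix.mulVec, dotProduct, hsum, wv] at h0 h1 h2 h3 h4 h5 h6 h7
  cases c <;> omega

lemma weyl_finite : (CL.weyl A6 : Set (Matrix N6 N6 ℤ)).Finite := by
  choose! e he using weyl_act 1
  refine Set.Finite.of_injOn (f := e) (t := Set.univ) (fun _ _ => Set.mem_univ _) ?_
    Set.finite_univ
  intro w hw w' hw' h
  apply weyl_ext
  intro t
  rw [← he w hw, ← he w' hw', h]

/-- The Weyl group as a finset. -/
def WF : Finset (Matrix N6 N6 ℤ) := weyl_finite.toFinset

lemma mem_WF (w : Matrix N6 N6 ℤ) : w ∈ WF ↔ w ∈ CL.weyl A6 := by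
  simp [WF]

lemma alt_eq (ν : N6 → ℤ) : CL.alt A6 ν =
    ∑ w ∈ WF, AddMonoidAlgebra.single (Matrix.mulVec w ν) (Matrix.det w) := by
  rw [CL.alt, finsum_mem_eq_finite_toFinset_sum _ weyl_finite, WF]

lemma alt_refl (i : N6) (ν : N6 → ℤ) :
    CL.alt A6 (Matrix.mulVec (CL.refl A6 i) ν) = - CL.alt A6 ν := by
  rw [alt_eq, alt_eq, ← Finset.sum_neg_distrib]
  refine Finset.sum_nbij' (fun w => w * CL.refl A6 i) (fun w => w * CL.refl A6 i) ?_ ?_ ?_ ?_ ?_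
  · intro w hw
    rw [mem_WF] at hw ⊢
    exact mul_mem hw (refl_mem i)
  · intro w hw
    rw [mem_WF] at hw ⊢
    exact mul_mem hw (refl_mem i)
  · intro w _
    rw [mul_assoc, refl_sq, mul_one]
  · intro w _
    rw [mul_assoc, refl_sq, mul_one]
  · intro w _
    rw [Matrix.mulVec_mulVec, Matrix.det_mul, refl_det, ← AddMonoidAlgebra.single_neg]
    simp

lemma alt_mul_wgf (k : ℕ) : CL.alt A6 (fun _ => 1) * CL.wgf adj6 pos16pp k (fun _ => True) =
    ∑ t : L6pp k, CL.alt A6 (fun j => 1 + wv k (vv t) j) := by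
  have hw : CL.wgf adj6 pos16pp k (fun _ => True) =
      ∑ t : L6pp k, AddMonoidAlgebra.single (wv k (vv t)) (1 : ℤ) := by
    unfold CL.wgf
    refine Finset.sum_congr rfl (fun t _ => ?_)
    congr 1
    funext i
    exact mwt_eq i t
  simp only [alt_eq]
  rw [Finset.sum_comm, hw, Finset.sum_mul]
  refine Finset.sum_congr rfl (fun w hw => ?_)
  obtain ⟨e, he⟩ := weyl_act k w ((mem_WF w).1 hw)
  rw [← Equiv.sum_comp e, Finset.mul_sum]
  refine Finset.sum_congr rfl (fun t _ => ?_)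
  rw [AddMonoidAlgebra.single_mul_single, mul_one, he, ← Matrix.mulVec_add]
  rfl

/-! ### Cancellation -/

open Classical in
lemma kill (k : ℕ) (j₀ : Fin 16) :
    ∑ t : L6pp k with First k j₀ (vv t), CL.alt A6 (fun j => 1 + wv k (vv t) j) = 0 := by
  have h : ∑ t : L6pp k with First k j₀ (vv t), CL.alt A6 (fun j => 1 + wv k (vv t) j) =
      ∑ t : L6pp k with First k j₀ (vv t), - CL.alt A6 (fun j => 1 + wv k (vv t) j) := by
    refine Finset.sum_bij'
      (fun t ht => mk _ (rf_first j₀ (vv_V t) (Finset.mem_filter.1 ht).2).1)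
      (fun t ht => mk _ (rf_first j₀ (vv_V t) (Finset.mem_filter.1 ht).2).1) ?_ ?_ ?_ ?_ ?_
    · intro t ht
      rw [Finset.mem_filter, vv_mk]
      exact ⟨Finset.mem_univ _, (rf_first j₀ (vv_V t) (Finset.mem_filter.1 ht).2).2.1⟩
    · intro t ht
      rw [Finset.mem_filter, vv_mk]
      exact ⟨Finset.mem_univ _, (rf_first j₀ (vv_V t) (Finset.mem_filter.1 ht).2).2.1⟩
    · intro t ht
      apply ext_vv
      simp only [vv_mk]
      exact (rf_first j₀ (vv_V t) (Finset.mem_filter.1 ht).2).2.2.1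
    · intro t ht
      apply ext_vv
      simp only [vv_mk]
      exact (rf_first j₀ (vv_V t) (Finset.mem_filter.1 ht).2).2.2.1
    · intro t ht
      simp only [vv_mk]
      rw [(rf_first j₀ (vv_V t) (Finset.mem_filter.1 ht).2).2.2.2, alt_refl, neg_neg]
  rw [Finset.sum_neg_distrib] at h
  generalize (∑ t : L6pp k with First k j₀ (vv t), CL.alt A6 (fun j => 1 + wv k (vv t) j)) = S at h
  ext μ
  have h3 : S.coeff μ = -(S.coeff μ) := congrArg (fun f => f.coeff μ) h
  change S.coeff μ = 0
  omega

open Classical in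
lemma partial_sum (k : ℕ) (f : L6pp k → AddMonoidAlgebra ℤ (N6 → ℤ))
    (hf : ∀ j₀, ∑ t : L6pp k with First k j₀ (vv t), f t = 0) (n : ℕ) (hn : n ≤ 16) :
    ∑ t : L6pp k, f t = ∑ t : L6pp k with (∀ j : Fin 16, j.1 < n → vv t j = k), f t := by
  induction n with
  | zero => simp
  | succ n ih =>
    rw [ih (by omega), ← Finset.sum_filter_add_sum_filter_not _
      (fun t : L6pp k => vv t ⟨n, by omega⟩ = k)]
    rw [Finset.filter_filter, Finset.filter_filter]
    have h0 := hf ⟨n, by omega⟩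
    have e1 : (Finset.univ.filter fun t : L6pp k =>
        (∀ j : Fin 16, j.1 < n → vv t j = k) ∧ ¬ vv t ⟨n, by omega⟩ = k) =
        Finset.univ.filter fun t : L6pp k => First k ⟨n, by omega⟩ (vv t) := by
      ext t
      have := (vv_V t).1 ⟨n, by omega⟩
      simp only [Finset.mem_filter, Finset.mem_univ, true_and, First, Fin.lt_def]
      exact and_congr_right fun _ => by omega
    rw [e1, h0, add_zero]
    refine Finset.sum_congr ?_ fun _ _ => rfl
    ext t
    simp only [Finset.mem_filter, Finset.mem_univ, true_and]
    constructor
    · rintro ⟨h1, h2⟩ j hj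
      rcases Nat.lt_succ_iff_lt_or_eq.1 hj with h | h
      · exact h1 j h
      · have : j = ⟨n, by omega⟩ := Fin.ext h
        rw [this]; exact h2
    · intro h
      exact ⟨fun j hj => h j (by omega), h _ (by simp)⟩

lemma V_const (k : ℕ) : V k (fun _ => k) := ⟨fun _ => le_rfl, fun _ _ => le_rfl⟩

lemma main_sum (k : ℕ) : ∑ t : L6pp k, CL.alt A6 (fun j => 1 + wv k (vv t) j) =
    CL.alt A6 (fun j => (if j = m6 then (k : ℤ) else 0) + 1) := by
  classical
  rw [partial_sum k _ (kill k) 16 le_rfl]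
  have : (Finset.univ.filter fun t : L6pp k => ∀ j : Fin 16, j.1 < 16 → vv t j = k) =
      {mk _ (V_const k)} := by
    ext t
    simp only [Finset.mem_filter, Finset.mem_univ, true_and, Finset.mem_singleton]
    constructor
    · intro h
      apply ext_vv
      funext j
      rw [vv_mk]
      exact h j j.2
    · rintro rfl j _
      rw [vv_mk]
  rw [this, Finset.sum_singleton, vv_mk]
  congr 1
  funext j
  cases j <;> simp [wv] <;> ring

end E6P

/-- the Weyl group of `E₆` is finite and
`𝒜(Z^ϱ)·WGF(L6''(k);Z) = 𝒜(Z^{kω₆'+ϱ})` in `ℤ[ℤ^6]`. -/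
theorem statement_6 (k : ℕ) :
    ((CL.weyl A6 : Set (Matrix N6 N6 ℤ)).Finite) ∧
    CL.alt A6 (fun _ => 1) * CL.wgf adj6 pos16pp k (fun _ => True) =
      CL.alt A6 (fun j => (if j = m6 then (k : ℤ) else 0) + 1) :=
  ⟨E6P.weyl_finite, (E6P.alt_mul_wgf k).trans (E6P.main_sum k)⟩

end
end
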